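/- arXiv:2412.16193 — 4 statements merged into one kernel-verified Lean document; each statement's English description precedes it below -/
import Mathlib

section
/- For all n ≥ 0, T_2(9n+1) ≡ 3 (mod 6) if n is a triangular number (n = m(m+1)/2 for some m ≥ 0), and T_2(9n+1) ≡ 0 (mod 6) otherwise. -/
noncomputable def Tcount (ℓ k n : ℕ) : ℕ :=
  Nat.card {f : Fin k → Σ m : ℕ, Nat.Partition m //
    (∑ i, (f i).1) = n ∧ ∀ i, ∀ p ∈ (f i).2.parts, ¬ ℓ ∣ p}

open PowerSeries Finset

noncomputable def Fser (R : Type) [CommRing R] : PowerSeries R :=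
  PowerSeries.mk fun n ↦ (#(Nat.Partition.restricted n (¬ 2 ∣ ·)) : R)

theorem Tcount_eq_sum (n : ℕ) : Tcount 2 3 n =
    ∑ l ∈ (univ : Finset (Fin 3)).piAntidiag n,
      ∏ i, #(Nat.Partition.restricted (l i) (¬ 2 ∣ ·)) := by
  classical
  let A := Σ l : {l // l ∈ (univ : Finset (Fin 3)).piAntidiag n},
    ∀ i, {p // p ∈ Nat.Partition.restricted (l.1 i) (¬ 2 ∣ ·)}
  let B := {f : Fin 3 → Σ m : ℕ, Nat.Partition m //
    (∑ i, (f i).1) = n ∧ ∀ i, ∀ p ∈ (f i).2.parts, ¬ 2 ∣ p}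
  let e : A ≃ B :=
    { toFun := fun a => ⟨fun i => ⟨a.1.1 i, (a.2 i).1⟩, by
        exact (mem_piAntidiag.1 a.1.2).1, fun i => by
        have := (a.2 i).2
        simpa [Nat.Partition.restricted] using this⟩
      invFun := fun f => ⟨⟨fun i => (f.1 i).1, by simpa using f.2.1⟩,
        fun i => ⟨(f.1 i).2, by simpa [Nat.Partition.restricted] using f.2.2 i⟩⟩
      left_inv := fun a => rfl
      right_inv := fun f => rfl }
  have h : Tcount 2 3 n = Nat.card A := (Nat.card_congr e).symm
  rw [h, Nat.card_eq_fintype_card, Fintype.card_sigma, ← Finset.sum_coe_sort (univ.piAntidiag n)]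
  refine Finset.sum_congr rfl fun l _ => ?_
  rw [Fintype.card_pi]
  refine Finset.prod_congr rfl fun i _ => ?_
  exact Fintype.card_coe _

theorem Tcount_eq_coeff (R : Type) [CommRing R] (n : ℕ) :
    (Tcount 2 3 n : R) = coeff n (Fser R ^ 3) := by
  rw [Tcount_eq_sum]
  have : Fser R ^ 3 = ∏ i : Fin 3, Fser R := by simp
  rw [this, coeff_prod]
  push_cast
  symm
  refine Finset.sum_bij (fun l _ => ⇑l) ?_ ?_ ?_ ?_
  · intro l hl; simpa using hl
  · intro a _ b _ h; exact DFunLike.coe_injective h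
  · intro b hb; exact ⟨Finsupp.equivFunOnFinite.symm b, by simpa using hb, by simp⟩
  · intro l hl; simp [Fser]

theorem Tcount_mod3 (n : ℕ) : Tcount 2 3 (9 * n + 1) ≡ 0 [MOD 3] := by
  rw [← ZMod.natCast_eq_natCast_iff, Tcount_eq_coeff]
  have h : PowerSeries.derivative (ZMod 3) (Fser (ZMod 3) ^ 3) = 0 := by
    rw [Derivation.leibniz_pow]
    have : (3 : ZMod 3) = 0 := rfl
    ext k
    rw [map_nsmul, nsmul_eq_mul]
    simp [this]
  have h2 := congrArg (coeff (9 * n)) h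
  rw [coeff_derivative] at h2
  have h9 : (9 : ZMod 3) = 0 := rfl
  simpa [h9] using h2

/-- Finite form of the Gauss identity, due to Shanks. -/
theorem shanks {R : Type} [CommRing R] (q : R) (n : ℕ) :
    ∑ s ∈ range (n + 1), (∏ r ∈ range s, (1 - q ^ (2 * r + 1))) *
      (∏ r ∈ Ico s n, (1 - q ^ (2 * r + 2))) * q ^ (s * (2 * n + 1)) =
    (∏ r ∈ range n, (1 - q ^ (2 * r + 1))) * ∑ j ∈ range (2 * n + 1), q ^ (∑ i ∈ range (j + 1), i) := by
  induction n with
  | zero => simp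
  | succ n ih =>
    set t : ℕ → R := fun s => (∏ r ∈ range s, (1 - q ^ (2 * r + 1))) *
      (∏ r ∈ Ico s n, (1 - q ^ (2 * r + 2))) * q ^ (s * (2 * n + 1)) with ht
    set D := ∏ r ∈ range n, (1 - q ^ (2 * r + 1)) with hD
    have tel : ∀ m ≤ n, ∑ s ∈ range m, t s * ((1 - q ^ (2 * n + 2)) * q ^ (2 * s) - 1 + q ^ (2 * n + 1))
        = t m * (1 - q ^ (2 * m)) := by
      intro m
      induction m with
      | zero => simp
      | succ m ihm =>
        intro hm
        rw [sum_range_succ, ihm (by omega)]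
        simp only [ht]
        rw [prod_range_succ, prod_eq_prod_Ico_succ_bot (show m < n by omega)]
        ring
    have key := tel n le_rfl
    have h1 : ∀ s ∈ range (n + 1), (∏ r ∈ range s, (1 - q ^ (2 * r + 1))) *
      (∏ r ∈ Ico s (n + 1), (1 - q ^ (2 * r + 2))) * q ^ (s * (2 * (n + 1) + 1)) =
        t s * ((1 - q ^ (2 * n + 2)) * q ^ (2 * s) - 1 + q ^ (2 * n + 1)) + t s * (1 - q ^ (2 * n + 1)) := by
      intro s hs
      simp only [ht]
      rw [prod_Ico_succ_top (by simpa [Nat.lt_succ_iff] using hs)]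
      ring
    rw [sum_range_succ, sum_congr rfl h1, sum_add_distrib, ← sum_mul, ih, sum_range_succ, key,
      prod_range_succ, show 2 * (n + 1) + 1 = 2 * n + 1 + 1 + 1 by ring, sum_range_succ _ (2 * n + 1 + 1),
      sum_range_succ _ (2 * n + 1)]
    have e1 : ∑ i ∈ range (2 * n + 1 + 1), i = n * (2 * n + 1) + (2 * n + 1) := by
      rw [Finset.sum_range_id, show (2 * n + 1 + 1) * (2 * n + 1 + 1 - 1) = ((n + 1) * (2 * n + 1)) * 2 by
        simp; ring, Nat.mul_div_cancel _ (by norm_num)]; ring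
    rw [sum_range_succ _ (2 * n + 1 + 1), e1]
    have e2 : t n = D * q ^ (n * (2 * n + 1)) := by simp [ht, hD]
    rw [e2]
    simp only [Ico_self, prod_empty]
    ring

open Classical in
noncomputable def psiTri : PowerSeries (ZMod 2) :=
  PowerSeries.mk fun n ↦ if ∃ m : ℕ, n = m * (m + 1) / 2 then 1 else 0

theorem tri_strictMono : StrictMono (fun m : ℕ => m * (m + 1) / 2) := by
  refine strictMono_nat_of_lt_succ fun m => ?_
  have : (m + 1) * (m + 1 + 1) = m * (m + 1) + (m + 1) * 2 := by ring
  simp only [this]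
  omega

open PowerSeries.WithPiTopology Filter Topology in
theorem Fser_cube : Fser (ZMod 2) ^ 3 = psiTri := by
  let _ : TopologicalSpace (ZMod 2) := ⊥
  have _ : DiscreteTopology (ZMod 2) := ⟨rfl⟩
  have hF : Fser (ZMod 2) ≠ 0 := by
    intro h
    have := congrArg (coeff 0) h
    revert this
    simp [Fser, Nat.Partition.restricted]
  let G : ℕ → PowerSeries (ZMod 2) := fun n => ∏ i ∈ range n, (1 + X ^ (i + 1))
  have hG : Tendsto G atTop (𝓝 (Fser (ZMod 2))) := by
    have h := (Nat.Partition.hasProd_powerSeriesMk_card_countRestricted (ZMod 2)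
      (m := 2) (by norm_num)).tendsto_prod_nat
    rw [← Nat.Partition.powerSeriesMk_card_restricted_eq_powerSeriesMk_card_countRestricted
      (ZMod 2) (m := 2) (by norm_num)] at h
    simpa [sum_range_succ, G, Fser] using h
  have h2 : (2 : PowerSeries (ZMod 2)) = 0 := by
    have h : (2 : ZMod 2) = 0 := rfl
    rw [← map_ofNat (PowerSeries.C (R := ZMod 2)) 2, h, map_zero]
  have hsub : ∀ a : PowerSeries (ZMod 2), 1 - a = 1 + a := fun a => by
    linear_combination (-a) * h2
  have hE : ∀ n, ∏ r ∈ range n, (1 - (X : PowerSeries (ZMod 2)) ^ (2 * r + 2)) = G n ^ 2 := by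
    intro n
    simp only [G, ← prod_pow, hsub]
    refine prod_congr rfl fun r _ => ?_
    linear_combination (-X ^ (r + 1)) * h2
  have hED : ∀ n, (∏ r ∈ range n, (1 - (X : PowerSeries (ZMod 2)) ^ (2 * r + 2))) *
      (∏ r ∈ range n, (1 - (X : PowerSeries (ZMod 2)) ^ (2 * r + 1))) = G (2 * n) := by
    intro n
    induction n with
    | zero => simp [G]
    | succ n ih =>
      have : G (2 * (n + 1)) = G (2 * n) * (1 - X ^ (2 * n + 1)) * (1 - X ^ (2 * n + 2)) := by
        simp only [G, hsub]
        rw [show 2 * (n + 1) = 2 * n + 1 + 1 by ring, prod_range_succ, prod_range_succ]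
      rw [prod_range_succ, prod_range_succ, this, ← ih]
      ring
  let S : ℕ → PowerSeries (ZMod 2) := fun n =>
    ∑ s ∈ range (n + 1), (∏ r ∈ range s, (1 - X ^ (2 * r + 1))) *
      (∏ r ∈ Ico s n, (1 - X ^ (2 * r + 2))) * X ^ (s * (2 * n + 1))
  let Q : ℕ → PowerSeries (ZMod 2) := fun n =>
    ∑ j ∈ range (2 * n + 1), X ^ (∑ i ∈ range (j + 1), i)
  have hid : ∀ n, G n ^ 2 * S n = G (2 * n) * Q n := by
    intro n
    simp only [S, Q]
    rw [shanks, ← hE, ← hED]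
    ring
  have hS0 : Tendsto (fun n => S n - G n ^ 2) atTop (𝓝 0) := by
    rw [tendsto_iff_coeff_tendsto]
    intro d
    refine tendsto_atTop_of_eventually_const (i₀ := d) fun n hn => ?_
    simp only [S]
    rw [sum_range_succ', ← hE]
    simp only [range_zero, prod_empty, one_mul, zero_mul, pow_zero, mul_one, Nat.Ico_zero_eq_range,
      add_sub_cancel_right, map_sum, map_zero]
    refine sum_eq_zero fun s _ => ?_
    rw [coeff_mul_X_pow', if_neg]
    nlinarith [Nat.zero_le (s * (2 * n + 1))]
  have hS : Tendsto S atTop (𝓝 (Fser (ZMod 2) ^ 2)) := by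
    simpa using hS0.add (hG.pow 2)
  have hQ : Tendsto Q atTop (𝓝 psiTri) := by
    rw [tendsto_iff_coeff_tendsto]
    intro d
    refine tendsto_atTop_of_eventually_const (i₀ := d) fun n hn => ?_
    simp only [Q, psiTri, coeff_mk, map_sum, coeff_X_pow]
    have e : ∀ j, ∑ i ∈ range (j + 1), i = j * (j + 1) / 2 := fun j => by
      rw [sum_range_id, Nat.add_sub_cancel, mul_comm]
    simp only [e]
    split_ifs with h
    · obtain ⟨m, hm⟩ := h
      rw [sum_eq_single m]
      · simp [hm]
      · intro b _ hb
        rw [if_neg]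
        intro h
        exact hb (tri_strictMono.injective (h.symm.trans hm))
      · intro h
        have := tri_strictMono.le_apply (x := m)
        simp only [← hm] at this
        exact absurd (mem_range.2 (by omega)) h
    · exact sum_eq_zero fun j _ => if_neg fun hj => h ⟨j, hj⟩
  have h2n : Tendsto (fun n : ℕ => 2 * n) atTop atTop :=
    tendsto_atTop_mono (fun n => by simp only [id]; omega) tendsto_id
  have l1 := (hG.pow 2).mul hS
  have l2 := (hG.comp h2n).mul hQ
  have := tendsto_nhds_unique l1 (l2.congr fun n => (hid n).symm)
  apply mul_left_cancel₀ hF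
  rw [← this]
  ring

theorem tri_nine (n : ℕ) : (∃ m : ℕ, 9 * n + 1 = m * (m + 1) / 2) ↔
    ∃ m : ℕ, n = m * (m + 1) / 2 := by
  have two : ∀ m : ℕ, m * (m + 1) / 2 * 2 = m * (m + 1) := fun m =>
    Nat.div_mul_cancel (Nat.even_mul_succ_self m).two_dvd
  constructor
  · rintro ⟨m, hm⟩
    have h := two m
    rw [← hm] at h
    have h3 : m % 3 = 1 := by
      have h' := congrArg (· % 3) h
      have : m % 3 < 3 := Nat.mod_lt _ (by norm_num)
      simp only [Nat.mul_mod m, Nat.add_mod m 1] at h'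
      interval_cases m % 3 <;> omega
    refine ⟨m / 3, ?_⟩
    have hk : m = 3 * (m / 3) + 1 := by omega
    generalize m / 3 = k at hk
    have := two k
    subst hk
    nlinarith
  · rintro ⟨m, hm⟩
    refine ⟨3 * m + 1, ?_⟩
    have h1 := two m
    have h2 := two (3 * m + 1)
    rw [← hm] at h1
    nlinarith

theorem stmt2 (n : ℕ) :
    (( ∃ m : ℕ, n = m * (m + 1) / 2) → Tcount 2 3 (9 * n + 1) ≡ 3 [MOD 6]) ∧
    ((¬ ∃ m : ℕ, n = m * (m + 1) / 2) → Tcount 2 3 (9 * n + 1) ≡ 0 [MOD 6]) := by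
  have h3 := Tcount_mod3 n
  have h2 := Tcount_eq_coeff (ZMod 2) (9 * n + 1)
  rw [Fser_cube, psiTri, coeff_mk] at h2
  have h9 := tri_nine n
  constructor
  · intro h
    rw [if_pos (h9.2 h)] at h2
    have h2' : Tcount 2 3 (9 * n + 1) ≡ 1 [MOD 2] := by
      rw [← ZMod.natCast_eq_natCast_iff]; simpa using h2
    unfold Nat.ModEq at *
    omega
  · intro h
    rw [if_neg (fun hh => h (h9.1 hh))] at h2
    have h2' : Tcount 2 3 (9 * n + 1) ≡ 0 [MOD 2] := by
      rw [← ZMod.natCast_eq_natCast_iff]; simpa using h2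
    unfold Nat.ModEq at *
    omega
end

section
/- For all n ≥ 0, T_2(9n+4) ≡ 0 (mod 24). -/
open Finset PowerSeries PowerSeries.WithPiTopology

/-- Shanks-type finite form of the Gauss identity for `φ(-q)`. -/
lemma shanks_phi {A : Type*} [CommRing A] (q : A) (u : ℕ → A)
    (hu : ∀ i, (1 + q ^ (i + 1)) * u i = 1) (n : ℕ) :
    1 + 2 * ∑ s ∈ range n, (-1) ^ (s + 1) * q ^ ((s + 1) ^ 2) =
      (∏ i ∈ Ico 0 n, ((1 - q ^ (i + 1)) * u i)) +
      ∑ s ∈ range n, (-1) ^ (s + 1) * 2 * u s * (∏ i ∈ Ico (s + 1) n, ((1 - q ^ (i + 1)) * u i))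
        * q ^ ((s + 1) * (n + 1)) := by
  induction n with
  | zero => simp
  | succ n ih =>
    set W : ℕ → ℕ → A := fun m s => ∏ i ∈ Ico s m, ((1 - q ^ (i + 1)) * u i) with hW
    have hW1 : ∀ s ≤ n, W (n + 1) s = W n s * ((1 - q ^ (n + 1)) * u n) := fun s hs => by
      simp only [hW]; rw [prod_Ico_succ_top hs]
    have hW2 : ∀ s < n, W n s = ((1 - q ^ (s + 1)) * u s) * W n (s + 1) := fun s hs => by
      simp only [hW]; rw [prod_eq_prod_Ico_succ_bot hs]
    have hWn : ∀ m, W m m = 1 := fun m => by simp [hW]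
    let h : ℕ → A := fun s => (-1) ^ (s + 1) * W n s * q ^ ((s + 1) * (n + 1))
    have key : ∀ s ∈ range n, (-1) ^ (s + 1) * 2 * u s * W (n + 1) (s + 1)
        * q ^ ((s + 1) * (n + 1 + 1)) = (-1) ^ (s + 1) * 2 * u s * W n (s + 1)
        * q ^ ((s + 1) * (n + 1)) + 2 * u n * (h (s + 1) - h s) := by
      intro s hs
      have hs' : s < n := mem_range.1 hs
      simp only [h]
      rw [hW1 (s + 1) (by omega), hW2 s hs']
      have e1 : q ^ ((s + 1) * (n + 1 + 1)) = q ^ ((s + 1) * (n + 1)) * q ^ (s + 1) := by ring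
      have e2 : q ^ ((s + 1 + 1) * (n + 1)) = q ^ ((s + 1) * (n + 1)) * q ^ (n + 1) := by ring
      rw [e1, e2, pow_succ (-1 : A) (s + 1)]
      have h1 := hu s
      have h2 := hu n
      generalize q ^ ((s + 1) * (n + 1)) = c at *
      generalize q ^ (s + 1) = a at *
      generalize q ^ (n + 1) = b at *
      linear_combination 2 * W n (s + 1) * c * (-1) ^ (s + 1) * (u s * h2 - u n * b * h1)
    change _ = W (n + 1) 0 + ∑ s ∈ range (n + 1), (-1) ^ (s + 1) * 2 * u s * W (n + 1) (s + 1)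
        * q ^ ((s + 1) * (n + 1 + 1))
    change _ = W n 0 + ∑ s ∈ range n, (-1) ^ (s + 1) * 2 * u s * W n (s + 1)
        * q ^ ((s + 1) * (n + 1)) at ih
    rw [sum_range_succ, mul_add, ← add_assoc, ih, sum_range_succ _ n, sum_congr rfl key,
      sum_add_distrib, ← mul_sum, sum_range_sub, hW1 0 (by omega), hWn]
    simp only [h, hWn]
    have h2 := hu n
    have e1 : q ^ ((n + 1) * (n + 1 + 1)) = q ^ ((n + 1) * (n + 1)) * q ^ (n + 1) := by ring
    have e2 : q ^ ((n + 1) ^ 2) = q ^ ((n + 1) * (n + 1)) := by ring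
    rw [e1, e2]
    generalize q ^ ((n + 1) * (n + 1)) = c at *
    simp only [zero_add, one_mul, pow_one]
    generalize q ^ (n + 1) = b at *
    linear_combination (- (2 * (-1) ^ (n + 1) * c) - W n 0) * h2

/-- Shanks finite form of the Gauss identity for `ψ(q)`. -/
lemma shanks_psi {A : Type*} [CommRing A] (q : A) (v : ℕ → A)
    (hv : ∀ i, (1 - q ^ (2 * i + 1)) * v i = 1) (n : ℕ) :
    ∑ s ∈ range n, (q ^ (s * (2 * s + 1)) + q ^ ((s + 1) * (2 * s + 1))) =
      ∑ s ∈ range n, (∏ i ∈ Ico s n, ((1 - q ^ (2 * i + 2)) * v i)) * q ^ (s * (2 * n + 1)) := by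
  induction n with
  | zero => simp
  | succ n ih =>
    set W : ℕ → ℕ → A := fun m s => ∏ i ∈ Ico s m, ((1 - q ^ (2 * i + 2)) * v i) with hW
    have hW1 : ∀ s ≤ n, W (n + 1) s = W n s * ((1 - q ^ (2 * n + 2)) * v n) := fun s hs => by
      simp only [hW]; rw [prod_Ico_succ_top hs]
    have hW2 : ∀ s < n, W n s = ((1 - q ^ (2 * s + 2)) * v s) * W n (s + 1) := fun s hs => by
      simp only [hW]; rw [prod_eq_prod_Ico_succ_bot hs]
    have hWn : ∀ m, W m m = 1 := fun m => by simp [hW]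
    let g : ℕ → A := fun s => W n s * (1 - q ^ (2 * s)) * q ^ (s * (2 * n + 1))
    have key : ∀ s ∈ range n, W (n + 1) s * q ^ (s * (2 * (n + 1) + 1)) =
        W n s * q ^ (s * (2 * n + 1)) + v n * (g (s + 1) - g s) := by
      intro s hs
      have hs' : s < n := mem_range.1 hs
      simp only [g]
      rw [hW1 s (by omega), hW2 s hs']
      have e1 : q ^ (s * (2 * (n + 1) + 1)) = q ^ (s * (2 * n + 1)) * q ^ (2 * s) := by ring
      have e2 : q ^ ((s + 1) * (2 * n + 1)) = q ^ (s * (2 * n + 1)) * q ^ (2 * n + 1) := by ring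
      have e3 : q ^ (2 * s + 1) = q ^ (2 * s) * q := by ring
      have e4 : q ^ (2 * s + 2) = q ^ (2 * s) * q * q := by ring
      have e5 : q ^ (2 * n + 2) = q ^ (2 * n + 1) * q := by ring
      have e6 : q ^ (2 * (s + 1)) = q ^ (2 * s) * q * q := by ring
      have h1 := hv s
      have h2 := hv n
      rw [e3] at h1
      rw [e1, e2, e4, e5, e6]
      generalize q ^ (s * (2 * n + 1)) = c at *
      generalize q ^ (2 * s) = a at *
      generalize q ^ (2 * n + 1) = b at *
      linear_combination W n (s + 1) * c * (1 - a * q * q) * (v s * h2 + v n * b * h1)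
    change _ = ∑ s ∈ range (n + 1), W (n + 1) s * q ^ (s * (2 * (n + 1) + 1))
    change _ = ∑ s ∈ range n, W n s * q ^ (s * (2 * n + 1)) at ih
    rw [sum_range_succ, ih, sum_range_succ _ n, sum_congr rfl key,
      sum_add_distrib, ← mul_sum, sum_range_sub, hW1 n le_rfl, hWn]
    simp only [g, hWn]
    have h2 := hv n
    have e1 : q ^ (n * (2 * (n + 1) + 1)) = q ^ (n * (2 * n + 1)) * q ^ (2 * n) := by ring
    have e2 : q ^ ((n + 1) * (2 * n + 1)) = q ^ (n * (2 * n + 1)) * (q ^ (2 * n) * q) := by ring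
    have e3 : q ^ (2 * n + 1) = q ^ (2 * n) * q := by ring
    have e5 : q ^ (2 * n + 2) = q ^ (2 * n) * q * q := by ring
    rw [e3] at h2
    rw [e1, e2, e5]
    generalize q ^ (n * (2 * n + 1)) = c at *
    simp only [mul_zero, pow_zero, sub_self, zero_mul, sub_zero, one_mul]
    generalize q ^ (2 * n) = a at *
    linear_combination (- c * (1 + a * q)) * h2

lemma signed_count (n : ℕ) (B : ℤ) (hB : 9 * (n : ℤ) + 4 < B) :
    ∑ p ∈ (Ico (-B) B ×ˢ Icc (-B) B).filter
      (fun p : ℤ × ℤ => 2 * p.1 ^ 2 + p.1 + p.2 ^ 2 = 9 * n + 4), (-1 : ℤ) ^ p.2.natAbs = 0 := by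
  have cls : ∀ s k : ℤ, 2 * s ^ 2 + s + k ^ 2 = 9 * n + 4 →
      ((∃ t, s = 3 * t - 1 - k) ∧ ¬ (3 ∣ s + 1 - k)) ∨
      ((∃ t, s = 3 * t - 1 + k) ∧ ¬ (3 ∣ s + 1 + k)) := by
    intro s k h
    obtain ⟨a, r, hr, rfl⟩ : ∃ a r : ℤ, (0 ≤ r ∧ r < 3) ∧ s = 3 * a + r :=
      ⟨s / 3, s % 3, by omega, by omega⟩
    obtain ⟨b, r', hr', rfl⟩ : ∃ a r : ℤ, (0 ≤ r ∧ r < 3) ∧ k = 3 * a + r :=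
      ⟨k / 3, k % 3, by omega, by omega⟩
    have h9 : 9 * (2 * a ^ 2 + b ^ 2) + 12 * a * r + 2 * r ^ 2 + 3 * a + r + 6 * b * r' + r' ^ 2
      = 9 * n + 4 := by linear_combination h
    obtain ⟨h0, h3⟩ := hr
    obtain ⟨h0', h3'⟩ := hr'
    generalize 2 * a ^ 2 + b ^ 2 = c at h9
    have E : ((∃ t, 3 * a + r = 3 * t - 1 - (3 * b + r')) ↔ (3 * a + r + 1 + (3 * b + r')) % 3 = 0)
        ∧ ((∃ t, 3 * a + r = 3 * t - 1 + (3 * b + r')) ↔ (3 * a + r + 1 - (3 * b + r')) % 3 = 0) := by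
      constructor
      · exact ⟨fun ⟨t, ht⟩ => by omega, fun _ => ⟨(3 * a + r + 1 + (3 * b + r')) / 3, by omega⟩⟩
      · exact ⟨fun ⟨t, ht⟩ => by omega, fun _ => ⟨(3 * a + r + 1 - (3 * b + r')) / 3, by omega⟩⟩
    rw [E.1, E.2]
    interval_cases r <;> interval_cases r' <;> omega
  have bd : ∀ s k : ℤ, 2 * s ^ 2 + s + k ^ 2 = 9 * n + 4 → -B ≤ s ∧ s < B ∧ -B ≤ k ∧ k < B := by
    intro s k h
    refine ⟨?_, ?_, ?_, ?_⟩ <;> by_contra! hc <;> nlinarith [sq_nonneg s, sq_nonneg k, sq_nonneg (s + 1)]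
  have par : ∀ a b : ℤ, (a + b) % 2 = 1 → (-1 : ℤ) ^ a.natAbs + (-1) ^ b.natAbs = 0 := by
    intro a b h
    rcases Int.emod_two_eq_zero_or_one a with ha | ha
    · rw [Even.neg_one_pow (Int.natAbs_even.2 (Int.even_iff.2 ha)),
        Odd.neg_one_pow (Int.natAbs_odd.2 (Int.odd_iff.2 (by omega)))]; rfl
    · rw [Odd.neg_one_pow (Int.natAbs_odd.2 (Int.odd_iff.2 ha)),
        Even.neg_one_pow (Int.natAbs_even.2 (Int.even_iff.2 (by omega)))]; rfl
  let τ : ℤ × ℤ → ℤ × ℤ := fun p => if 3 ∣ p.1 + 1 + p.2 then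
    ((2 * p.2 - p.1 - 1) / 3, (4 * p.1 + 1 + p.2) / 3) else
    ((-2 * p.2 - p.1 - 1) / 3, (p.2 - 4 * p.1 - 1) / 3)
  have br : ∀ s k : ℤ, 2 * s ^ 2 + s + k ^ 2 = 9 * n + 4 →
      2 * (τ (s, k)).1 ^ 2 + (τ (s, k)).1 + (τ (s, k)).2 ^ 2 = 9 * n + 4 ∧
      (k + (τ (s, k)).2) % 2 = 1 ∧ τ (τ (s, k)) = (s, k) := by
    intro s k h
    rcases cls s k h with ⟨⟨t, rfl⟩, h2⟩ | ⟨⟨t, rfl⟩, h2⟩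
    · have e : τ (3 * t - 1 - k, k) = (k - t, 4 * t - 1 - k) := by
        simp only [τ]; rw [if_pos (by omega)]
        ext <;> simp only <;> omega
      rw [e]
      refine ⟨by simp only; linear_combination h, by simp only; omega, ?_⟩
      simp only [τ]; rw [if_pos (by omega)]
      ext <;> simp only <;> omega
    · have e : τ (3 * t - 1 + k, k) = (-k - t, 1 - 4 * t - k) := by
        simp only [τ]; rw [if_neg h2]
        ext <;> simp only <;> omega
      rw [e]
      have h' : 2 * (-k - t) ^ 2 + (-k - t) + (1 - 4 * t - k) ^ 2 = 9 * n + 4 := by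
        linear_combination h
      have hn : ¬ 3 ∣ (-k - t) + 1 + (1 - 4 * t - k) := by
        rcases cls _ _ h' with ⟨_, h3⟩ | ⟨_, h3⟩
        · exact absurd ⟨t, by ring⟩ h3
        · exact h3
      refine ⟨h', by simp only; omega, ?_⟩
      simp only [τ]; rw [if_neg hn]
      ext <;> simp only <;> omega
  apply Finset.sum_involution (fun p _ => τ p)
  · rintro ⟨s, k⟩ hp
    exact par _ _ (br s k (mem_filter.1 hp).2).2.1
  · rintro ⟨s, k⟩ hp _ hh
    have := (br s k (mem_filter.1 hp).2).2.1
    rw [hh] at this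
    simp only at this
    omega
  · rintro ⟨s, k⟩ hp
    have h1 := (br s k (mem_filter.1 hp).2).1
    have h2 := bd _ _ h1
    simp only [mem_filter, mem_product, mem_Ico, mem_Icc]
    exact ⟨⟨⟨h2.1, h2.2.1⟩, h2.2.2.1, h2.2.2.2.le⟩, h1⟩
  · rintro ⟨s, k⟩ hp
    exact (br s k (mem_filter.1 hp).2).2.2


noncomputable def Fgen : ℤ⟦X⟧ :=
  PowerSeries.mk fun n => (#(Nat.Partition.restricted n (¬ 2 ∣ ·)) : ℤ)

lemma coeff_cube (n : ℕ) : (Tcount 2 3 n : ℤ) = coeff n (Fgen ^ 3) := by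
  have e : Fgen ^ 3 = ∏ _i : Fin 3, Fgen := by simp
  rw [e, PowerSeries.coeff_prod]
  let P : (m : ℕ) → Type := fun m => {p : Nat.Partition m // ∀ x ∈ p.parts, ¬ 2 ∣ x}
  let eq : {f : Fin 3 → Σ m : ℕ, Nat.Partition m //
      (∑ i, (f i).1) = n ∧ ∀ i, ∀ p ∈ (f i).2.parts, ¬ 2 ∣ p} ≃
      Σ l : {l : Fin 3 →₀ ℕ // l ∈ finsuppAntidiag univ n}, ∀ i, P (l.1 i) :=
    { toFun := fun f => ⟨⟨Finsupp.equivFunOnFinite.symm (fun i => (f.1 i).1), by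
          simpa [mem_finsuppAntidiag] using f.2.1⟩, fun i => ⟨(f.1 i).2, f.2.2 i⟩⟩
      invFun := fun g => ⟨fun i => ⟨g.1.1 i, (g.2 i).1⟩, by
          have := g.1.2
          rw [mem_finsuppAntidiag] at this
          exact this.1, fun i => (g.2 i).2⟩
      left_inv := fun f => rfl
      right_inv := fun g => Sigma.ext (Subtype.ext (Finsupp.ext fun i => rfl)) HEq.rfl }
  have hP : ∀ m, Nat.card (P m) = #(Nat.Partition.restricted m (¬ 2 ∣ ·)) := by
    intro m
    simp only [P]
    rw [Nat.card_eq_fintype_card, Fintype.card_subtype]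
    rfl
  have : ∀ m, Finite (P m) := fun m => by simp only [P]; infer_instance
  rw [Tcount, Nat.card_congr eq, Nat.card_sigma]
  simp only [Nat.card_pi, hP]
  push_cast
  rw [Finset.sum_coe_sort (finsuppAntidiag univ n)
    (fun l => ∏ i, ((#(Nat.Partition.restricted (l i) (¬ 2 ∣ ·)) : ℕ) : ℤ))]
  simp [Fgen]

lemma three_dvd (f : ℤ⟦X⟧) (N : ℕ) (h : ¬ 3 ∣ N + 1) : (3 : ℤ) ∣ coeff (N + 1) (f ^ 3) := by
  have h1 : coeff N (derivative ℤ (f ^ 3)) = coeff (N + 1) (f ^ 3) * ((N : ℤ) + 1) := by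
    rw [coeff_derivative]
  have h2 : derivative ℤ (f ^ 3) = 3 * (f ^ 2 * derivative ℤ f) := by
    rw [Derivation.leibniz_pow]
    simp
  have h3 : (3 : ℤ) ∣ coeff (N + 1) (f ^ 3) * ((N : ℤ) + 1) := by
    rw [← h1, h2]
    have : (3 : ℤ⟦X⟧) = C (3 : ℤ) := by simp
    rw [this, coeff_C_mul]
    exact dvd_mul_right _ _
  rcases Int.prime_three.dvd_or_dvd h3 with h4 | h4
  · exact h4
  · exact absurd (by exact_mod_cast h4) h

lemma exists_inv_plus (i : ℕ) : ∃ u : ℤ⟦X⟧, (1 + X ^ (i + 1)) * u = 1 :=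
  ⟨invOfUnit _ 1, mul_invOfUnit _ _ (by simp)⟩

lemma limits : ∃ φ ψ : ℤ⟦X⟧, Fgen ^ 3 * φ = ψ ∧ ∃ u v : ℕ → ℤ⟦X⟧,
    (∀ i, (1 + X ^ (i + 1)) * u i = 1) ∧ (∀ i, (1 - X ^ (2 * i + 1)) * v i = 1) ∧
    (∀ d, ∀ᶠ n in Filter.atTop, coeff d (∏ i ∈ range n, ((1 - X ^ (i + 1)) * u i)) = coeff d φ) ∧
    (∀ d, ∀ᶠ n in Filter.atTop,
      coeff d (∏ i ∈ range n, ((1 - X ^ (2 * i + 2)) * v i)) = coeff d ψ) := by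
  let _ : TopologicalSpace ℤ := ⊥
  have _ : DiscreteTopology ℤ := ⟨rfl⟩
  choose u hu using exists_inv_plus
  let v : ℕ → ℤ⟦X⟧ := fun i => ∑' j : ℕ, X ^ ((2 * i + 1) * j)
  have hv : ∀ i, (1 - X ^ (2 * i + 1)) * v i = 1 := by
    intro i
    simp only [v, pow_mul]
    simp only [← pow_mul]
    rw [mul_comm]
    simp only [pow_mul _ (2 * i + 1)]
    exact tsum_pow_mul_one_sub_of_constantCoeff_eq_zero (by simp)
  have hF1 : HasProd (fun i : ℕ => (1 + X ^ (i + 1) : ℤ⟦X⟧)) Fgen := by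
    have := Nat.Partition.hasProd_powerSeriesMk_card_countRestricted ℤ (m := 2) (by norm_num)
    rw [← Nat.Partition.powerSeriesMk_card_restricted_eq_powerSeriesMk_card_countRestricted ℤ
      (by norm_num)] at this
    simp only [sum_range_succ, sum_range_zero, mul_zero, mul_one, pow_zero, zero_add] at this
    exact this
  have hF2 : HasProd v Fgen := by
    have := Nat.Partition.hasProd_powerSeriesMk_card_restricted ℤ (fun i => ¬ 2 ∣ i)
    have inj : Function.Injective (fun i : ℕ => 2 * i) := fun a b h => by simpa using h
    rw [← inj.hasProd_iff] at this
    · have hh : v = ((fun i => if ¬2 ∣ i + 1 then ∑' (j : ℕ), X ^ ((i + 1) * j) else 1) ∘ fun i => 2 * i) := by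
        ext1 i
        simp only [Function.comp, v]
        rw [if_pos (by omega)]
      rw [hh]
      exact this
    · intro x hx
      rw [if_neg]
      simp only [not_not]
      by_contra h
      exact hx ⟨x / 2, by simp only; omega⟩
  obtain ⟨E, hE⟩ := multipliable_one_sub_X_pow ℤ
  have hE2 := hE.mul hF1
  have hE2' : HasProd (fun i : ℕ => (1 - X ^ (2 * i + 2) : ℤ⟦X⟧)) (E * Fgen) := by
    convert hE2 using 1
    ext1 i
    ring
  have hm : Multipliable (fun i : ℕ => ((1 - X ^ (i + 1)) * u i : ℤ⟦X⟧)) := by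
    have e : ∀ i : ℕ, ((1 - X ^ (i + 1)) * u i : ℤ⟦X⟧) = 1 + (X ^ (i + 1) * (-2 * u i)) := by
      intro i; linear_combination hu i
    simp only [e]
    apply multipliable_one_add_of_tendsto_order_atTop_nhds_top
    refine ENat.tendsto_nhds_top_iff_natCast_lt.mpr fun n ↦ Filter.eventually_atTop.mpr ⟨n, ?_⟩
    intro m hm
    have h1 : (((m + 1 : ℕ) : ℕ∞)) ≤ (X ^ (m + 1) * (-2 * u m) : ℤ⟦X⟧).order := by
      apply PowerSeries.nat_le_order
      intro i hi
      rw [coeff_X_pow_mul', if_neg (by omega)]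
    refine lt_of_lt_of_le ?_ h1
    exact_mod_cast Nat.lt_succ_of_le hm
  obtain ⟨Q, hQ⟩ := hm
  have hFQ : Fgen * Q = E := by
    have := hF1.mul hQ
    refine (HasProd.unique this ?_)
    convert hE using 1
    ext1 i
    linear_combination (1 - X ^ (i + 1)) * hu i
  have hP := hE2'.mul hF2
  have lim : ∀ (f : ℕ → ℤ⟦X⟧) (a : ℤ⟦X⟧), HasProd f a →
      ∀ d, ∀ᶠ n in Filter.atTop, coeff d (∏ i ∈ range n, f i) = coeff d a := by
    intro f a h d
    have h1 := (tendsto_iff_coeff_tendsto ℤ _ _ _).1 h.tendsto_prod_nat d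
    rw [nhds_discrete, Filter.tendsto_pure] at h1
    exact h1
  refine ⟨Q, E * Fgen * Fgen, ?_, u, v, hu, hv, lim _ _ hQ, lim _ _ hP⟩
  linear_combination Fgen ^ 2 * hFQ

lemma psi_int (n : ℕ) : ∑ s ∈ range n, ((X : ℤ⟦X⟧) ^ (s * (2 * s + 1)) + X ^ ((s + 1) * (2 * s + 1)))
    = ∑ s ∈ Ico (-(n : ℤ)) n, X ^ (2 * s ^ 2 + s).toNat := by
  induction n with
  | zero => simp
  | succ n ih =>
    have e : Ico (-((n + 1 : ℕ) : ℤ)) ((n + 1 : ℕ) : ℤ) =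
        insert (n : ℤ) (insert (-(n : ℤ) - 1) (Ico (-(n : ℤ)) n)) := by
      ext x
      simp only [mem_Ico, mem_insert]
      push_cast
      omega
    rw [e, sum_insert (by simp; omega), sum_insert (by simp), ← ih, sum_range_succ]
    have e1 : (2 * (n : ℤ) ^ 2 + n).toNat = n * (2 * n + 1) := by
      have : 2 * (n : ℤ) ^ 2 + n = ((n * (2 * n + 1) : ℕ) : ℤ) := by push_cast; ring
      rw [this, Int.toNat_natCast]
    have e2 : (2 * (-(n : ℤ) - 1) ^ 2 + (-(n : ℤ) - 1)).toNat = (n + 1) * (2 * n + 1) := by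
      have : 2 * (-(n : ℤ) - 1) ^ 2 + (-(n : ℤ) - 1) = (((n + 1) * (2 * n + 1) : ℕ) : ℤ) := by
        push_cast; ring
      rw [this, Int.toNat_natCast]
    rw [e1, e2]
    ring

lemma phi_int (n : ℕ) : 1 + 2 * ∑ s ∈ range n, (-1) ^ (s + 1) * (X : ℤ⟦X⟧) ^ ((s + 1) ^ 2)
    = ∑ k ∈ Icc (-(n : ℤ)) n, C ((-1 : ℤ) ^ k.natAbs) * X ^ (k.natAbs ^ 2) := by
  induction n with
  | zero => simp
  | succ n ih =>
    have e : Icc (-((n + 1 : ℕ) : ℤ)) ((n + 1 : ℕ) : ℤ) =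
        insert ((n : ℤ) + 1) (insert (-(n : ℤ) - 1) (Icc (-(n : ℤ)) n)) := by
      ext x
      simp only [mem_Icc, mem_insert]
      push_cast
      omega
    rw [e, sum_insert (by simp; omega), sum_insert (by simp), ← ih, sum_range_succ]
    have e1 : ((n : ℤ) + 1).natAbs = n + 1 := by omega
    have e2 : (-(n : ℤ) - 1).natAbs = n + 1 := by omega
    rw [e1, e2]
    simp only [map_pow, map_neg, map_one]
    ring

lemma coeff_psi_phi (n m : ℕ) (hm : 9 * n + 4 < m) : coeff (9 * n + 4)
    ((∑ s ∈ range m, ((X : ℤ⟦X⟧) ^ (s * (2 * s + 1)) + X ^ ((s + 1) * (2 * s + 1)))) *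
      (1 + 2 * ∑ s ∈ range m, (-1) ^ (s + 1) * (X : ℤ⟦X⟧) ^ ((s + 1) ^ 2))) = 0 := by
  rw [psi_int, phi_int, sum_mul_sum, ← sum_product', map_sum,
    ← signed_count n m (by exact_mod_cast hm), sum_filter]
  refine sum_congr rfl fun p _ => ?_
  rw [mul_left_comm, ← pow_add, coeff_C_mul, coeff_X_pow]
  have hnn : 0 ≤ 2 * p.1 ^ 2 + p.1 := by
    rcases le_or_gt 0 p.1 with h | h <;> nlinarith
  have hk : ((p.2.natAbs ^ 2 : ℕ) : ℤ) = p.2 ^ 2 := by push_cast; exact sq_abs _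
  have : 9 * n + 4 = (2 * p.1 ^ 2 + p.1).toNat + p.2.natAbs ^ 2 ↔
      2 * p.1 ^ 2 + p.1 + p.2 ^ 2 = 9 * n + 4 := by
    rw [← hk]
    omega
  by_cases h : 2 * p.1 ^ 2 + p.1 + p.2 ^ 2 = 9 * n + 4
  · rw [if_pos (this.2 h), if_pos h, mul_one]
  · rw [if_neg (fun h' => h (this.1 h')), if_neg h, mul_zero]

lemma res9 : ∀ s k : ZMod 9, 2 * s ^ 2 + s + 2 * k ^ 2 ≠ 4 := by decide

lemma res1 (n s k : ℕ) : 9 * n + 4 ≠ s * (2 * s + 1) + 2 * k ^ 2 := by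
  intro h
  have h1 := congrArg (Nat.cast : ℕ → ZMod 9) h
  push_cast at h1
  have h9 : (9 : ZMod 9) = 0 := rfl
  exact res9 s k (by linear_combination -h1 + n * h9)

lemma res2 (n s k : ℕ) : 9 * n + 4 ≠ (s + 1) * (2 * s + 1) + 2 * k ^ 2 := by
  intro h
  have h1 := congrArg (Nat.cast : ℕ → ZMod 9) h
  push_cast at h1
  have h9 : (9 : ZMod 9) = 0 := rfl
  exact res9 (-s - 1) k (by linear_combination -h1 + n * h9)

lemma coeff_psi_k (n m k : ℕ) : coeff (9 * n + 4)
    ((∑ s ∈ range m, ((X : ℤ⟦X⟧) ^ (s * (2 * s + 1)) + X ^ ((s + 1) * (2 * s + 1)))) *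
      X ^ (2 * k ^ 2)) = 0 := by
  rw [sum_mul, map_sum]
  refine sum_eq_zero fun s _ => ?_
  rw [add_mul, ← pow_add, ← pow_add, map_add, coeff_X_pow, coeff_X_pow, if_neg (res1 n s k),
    if_neg (res2 n s k), add_zero]

lemma sum_sq_two {A : Type*} [CommRing A] (f : ℕ → A) (n : ℕ) :
    ∃ r, (∑ s ∈ range n, f s) ^ 2 = ∑ s ∈ range n, f s ^ 2 + 2 * r := by
  induction n with
  | zero => exact ⟨0, by simp⟩
  | succ n ih =>
    obtain ⟨r, hr⟩ := ih
    refine ⟨r + (∑ s ∈ range n, f s) * f n, ?_⟩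
    rw [sum_range_succ, sum_range_succ]
    linear_combination hr

lemma truncated (N : ℕ) : ∃ m, N < m ∧ (X : ℤ⟦X⟧) ^ (N + 1) ∣
    Fgen ^ 3 * (1 + 2 * ∑ s ∈ range m, (-1) ^ (s + 1) * (X : ℤ⟦X⟧) ^ ((s + 1) ^ 2)) -
    ∑ s ∈ range m, ((X : ℤ⟦X⟧) ^ (s * (2 * s + 1)) + X ^ ((s + 1) * (2 * s + 1))) := by
  obtain ⟨φ, ψ, hF, u, v, hu, hv, h1, h2⟩ := limits
  have h1' := (Filter.eventually_all_finset (range (N + 1))).2 (fun d _ => h1 d)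
  have h2' := (Filter.eventually_all_finset (range (N + 1))).2 (fun d _ => h2 d)
  obtain ⟨m, ⟨hm1, hm2⟩, hm⟩ := ((h1'.and h2').and (Filter.eventually_gt_atTop N)).exists
  refine ⟨m, hm, ?_⟩
  have d1 : (X : ℤ⟦X⟧) ^ (N + 1) ∣ (∏ i ∈ range m, ((1 - X ^ (i + 1)) * u i)) - φ := by
    rw [X_pow_dvd_iff]
    intro d hd
    rw [map_sub, hm1 d (mem_range.2 hd), sub_self]
  have d2 : (X : ℤ⟦X⟧) ^ (N + 1) ∣ (∏ i ∈ range m, ((1 - X ^ (2 * i + 2)) * v i)) - ψ := by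
    rw [X_pow_dvd_iff]
    intro d hd
    rw [map_sub, hm2 d (mem_range.2 hd), sub_self]
  have s1 := shanks_phi X u hu m
  have s2 := shanks_psi X v hv m
  obtain ⟨m, rfl⟩ : ∃ m', m = m' + 1 := ⟨m - 1, by omega⟩
  rw [sum_range_succ' (fun s => (∏ i ∈ Ico s (m + 1), ((1 - X ^ (2 * i + 2)) * v i)) *
    (X : ℤ⟦X⟧) ^ (s * (2 * (m + 1) + 1)))] at s2
  rw [← range_eq_Ico] at s1 s2
  have d3 : (X : ℤ⟦X⟧) ^ (N + 1) ∣ ∑ s ∈ range (m + 1), (-1) ^ (s + 1) * 2 * u s *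
      (∏ i ∈ Ico (s + 1) (m + 1), ((1 - X ^ (i + 1)) * u i)) * X ^ ((s + 1) * (m + 1 + 1)) := by
    refine dvd_sum fun s _ => Dvd.dvd.mul_left (pow_dvd_pow _ ?_) _
    nlinarith
  have d4 : (X : ℤ⟦X⟧) ^ (N + 1) ∣ ∑ s ∈ range m,
      (∏ i ∈ Ico (s + 1) (m + 1), ((1 - X ^ (2 * i + 2)) * v i)) *
        X ^ ((s + 1) * (2 * (m + 1) + 1)) := by
    refine dvd_sum fun s _ => Dvd.dvd.mul_left (pow_dvd_pow _ ?_) _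
    nlinarith
  rw [s1, s2]
  have := (((d1.add d3).mul_left (Fgen ^ 3)).sub (d2.add d4))
  convert this using 1
  rw [zero_mul, pow_zero, mul_one]
  linear_combination hF

lemma eight_dvd (n : ℕ) : (8 : ℤ) ∣ coeff (9 * n + 4) (Fgen ^ 3) := by
  obtain ⟨m, hm, r, hr⟩ := truncated (9 * n + 4)
  have c1 := coeff_psi_phi n m hm
  have c2 := coeff_psi_k n m
  obtain ⟨w, hw⟩ := sum_sq_two (fun s => (-1) ^ (s + 1) * (X : ℤ⟦X⟧) ^ ((s + 1) ^ 2)) m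
  set Ψ : ℤ⟦X⟧ := ∑ s ∈ range m, (X ^ (s * (2 * s + 1)) + X ^ ((s + 1) * (2 * s + 1)))
  set σ : ℤ⟦X⟧ := ∑ s ∈ range m, (-1) ^ (s + 1) * X ^ ((s + 1) ^ 2)
  have hρ : ∑ s ∈ range m, ((-1) ^ (s + 1) * (X : ℤ⟦X⟧) ^ ((s + 1) ^ 2)) ^ 2 =
      ∑ s ∈ range m, X ^ (2 * (s + 1) ^ 2) := by
    refine sum_congr rfl fun s _ => ?_
    rw [mul_pow, ← pow_mul, mul_comm (s + 1) 2, pow_mul, neg_one_sq, one_pow, one_mul, ← pow_mul,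
      mul_comm]
  rw [hρ] at hw
  set ρ : ℤ⟦X⟧ := ∑ s ∈ range m, X ^ (2 * (s + 1) ^ 2)
  have c3 : coeff (9 * n + 4) (Ψ * ρ) = 0 := by
    rw [mul_sum, map_sum]
    exact sum_eq_zero fun s _ => c2 (s + 1)
  have c4 : coeff (9 * n + 4) Ψ = 0 := by simpa using c2 0
  have main : Fgen ^ 3 = C 3 * (Ψ * (1 + 2 * σ)) - C 2 * Ψ + C 12 * (Ψ * ρ)
      + C 8 * (3 * Ψ * w + Ψ * σ ^ 3 - Fgen ^ 3 * (σ + 3 * σ ^ 2 + 4 * σ ^ 3 + 2 * σ ^ 4))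
      + X ^ (9 * n + 4 + 1) * (r * (1 + 2 * σ) ^ 3) := by
    have e3 : (C (3 : ℤ) : ℤ⟦X⟧) = 3 := by simp
    have e2 : (C (2 : ℤ) : ℤ⟦X⟧) = 2 := by simp
    have e12 : (C (12 : ℤ) : ℤ⟦X⟧) = 12 := by simp
    have e8 : (C (8 : ℤ) : ℤ⟦X⟧) = 8 := by simp
    rw [e3, e2, e12, e8]
    linear_combination (1 + 2 * σ) ^ 3 * hr + 12 * Ψ * hw
  rw [main, map_add, map_add, map_add, map_sub, coeff_C_mul, coeff_C_mul, coeff_C_mul, coeff_C_mul,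
    c1, c3, c4, coeff_X_pow_mul', if_neg (by omega)]
  simp

theorem stmt3 (n : ℕ) : 24 ∣ Tcount 2 3 (9 * n + 4) := by
  have h8 := eight_dvd n
  have h3 := three_dvd Fgen (9 * n + 3) (by omega)
  rw [← coeff_cube] at h8
  rw [show 9 * n + 3 + 1 = 9 * n + 4 by rfl, ← coeff_cube] at h3
  omega
end

section
/- For all n ≥ 0, T_2(9n+7) ≡ 0 (mod 24). -/
open Finset

section finite
variable {R : Type*} [CommRing R] (q : R)

def Dn (n : ℕ) : R := ∏ j ∈ range n, (1 + q ^ (j + 1))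
def Hn (a n : ℕ) : R := ∏ j ∈ Ico a n, (1 - q ^ (j + 1))
def On (n : ℕ) : R := ∏ j ∈ range n, (1 - q ^ (2 * j + 1))
def Wn (n : ℕ) : R := ∑ t ∈ range n, (-1) ^ (t + 1) * 2 * Dn q t * Hn q (t + 1) n * q ^ ((t + 1) * (n + 1))
def phin (n : ℕ) : R := 1 + 2 * ∑ s ∈ range n, (-1) ^ (s + 1) * q ^ ((s + 1) ^ 2)
def psin (n : ℕ) : R := ∑ s ∈ range (2 * n), q ^ (s * (s + 1) / 2)
def Vn (n : ℕ) : R := ∑ s ∈ range n, On q s * Hn (q ^ 2) s n * q ^ (s * (2 * n + 1))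

lemma Dn_succ (n : ℕ) : Dn q (n + 1) = Dn q n * (1 + q ^ (n + 1)) := prod_range_succ _ _
lemma On_succ (n : ℕ) : On q (n + 1) = On q n * (1 - q ^ (2 * n + 1)) := prod_range_succ _ _
lemma Hn_self (n : ℕ) : Hn q n n = 1 := by simp [Hn]
lemma Hn_top {a n : ℕ} (h : a ≤ n) : Hn q a (n + 1) = Hn q a n * (1 - q ^ (n + 1)) :=
  prod_Ico_succ_top h _
lemma Hn_bot {a n : ℕ} (h : a < n) : Hn q a n = (1 - q ^ (a + 1)) * Hn q (a + 1) n :=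
  prod_eq_prod_Ico_succ_bot h _

lemma Wn_tel (n t : ℕ) (ht : t ≤ n) :
    ∑ t ∈ range t, (-1) ^ (t + 1) * 2 * Dn q t * Hn q (t + 1) n *
      ((1 - q ^ (n + 1)) * q ^ ((t + 1) * (n + 2)) - (1 + q ^ (n + 1)) * q ^ ((t + 1) * (n + 1)))
    = 2 * q ^ (n + 1) * Hn q 0 n - (-1) ^ t * q ^ ((t + 1) * (n + 1)) * 2 * Dn q t * Hn q t n := by
  induction t with
  | zero => simp [Dn]; ring
  | succ t ih =>
    rw [sum_range_succ, ih (by omega), Hn_bot q (show t < n by omega), Dn_succ]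
    ring

lemma phi_finite (n : ℕ) : Dn q n * phin q n = Hn q 0 n + Wn q n := by
  induction n with
  | zero => simp [Dn, phin, Hn, Wn]
  | succ n ih =>
    have h1 : phin q (n + 1) = phin q n + 2 * ((-1) ^ (n + 1) * q ^ ((n + 1) ^ 2)) := by
      simp only [phin, sum_range_succ]; ring
    have h2 : Wn q (n + 1) - (1 + q ^ (n + 1)) * Wn q n = (∑ t ∈ range n, (-1) ^ (t + 1) * 2 * Dn q t * Hn q (t + 1) n *
      ((1 - q ^ (n + 1)) * q ^ ((t + 1) * (n + 2)) - (1 + q ^ (n + 1)) * q ^ ((t + 1) * (n + 1))))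
      + (-1) ^ (n + 1) * 2 * Dn q n * q ^ ((n + 1) * (n + 2)) := by
      rw [Wn, sum_range_succ, Hn_self, Wn, mul_sum, add_sub_right_comm, ← sum_sub_distrib]
      congr 1
      · apply sum_congr rfl
        intro t ht
        rw [Hn_top q (show t + 1 ≤ n by simp at ht; omega)]
        ring
      · ring
    rw [Wn_tel q n n le_rfl, Hn_self] at h2
    rw [h1, Dn_succ, Hn_top q (Nat.zero_le n)]
    linear_combination (1 + q ^ (n+1)) * ih - h2

lemma Vn_tel (n t : ℕ) (ht : t ≤ n) :
    ∑ s ∈ range t, On q s * Hn (q ^ 2) s n *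
      ((1 - q ^ (2 * n + 2)) * q ^ (s * (2 * n + 3)) - (1 - q ^ (2 * n + 1)) * q ^ (s * (2 * n + 1)))
    = On q t * Hn (q ^ 2) t n * (1 - q ^ (2 * t)) * q ^ (t * (2 * n + 1)) := by
  induction t with
  | zero => simp
  | succ t ih =>
    rw [sum_range_succ, ih (by omega), Hn_bot (q ^ 2) (show t < n by omega), On_succ]
    ring

lemma psi_finite (n : ℕ) : On q n * psin q n = Vn q n := by
  induction n with
  | zero => simp [psin, Vn]
  | succ n ih =>
    have h1 : psin q (n + 1) = psin q n + q ^ (n * (2 * n + 1)) + q ^ ((n + 1) * (2 * n + 1)) := by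
      rw [psin, show 2 * (n + 1) = 2 * n + 1 + 1 by ring, sum_range_succ, sum_range_succ, psin]
      congr 3
      · rw [show 2 * n * (2 * n + 1) = 2 * (n * (2 * n + 1)) by ring]; simp
      · rw [show (2 * n + 1) * (2 * n + 1 + 1) = 2 * ((n + 1) * (2 * n + 1)) by ring]; simp
    have h2 : Vn q (n + 1) - (1 - q ^ (2 * n + 1)) * Vn q n = (∑ s ∈ range n, On q s * Hn (q ^ 2) s n *
      ((1 - q ^ (2 * n + 2)) * q ^ (s * (2 * n + 3)) - (1 - q ^ (2 * n + 1)) * q ^ (s * (2 * n + 1))))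
      + On q n * (1 - q ^ (2 * n + 2)) * q ^ (n * (2 * n + 3)) := by
      rw [Vn, sum_range_succ, Hn_top _ le_rfl, Hn_self, Vn, mul_sum, add_sub_right_comm, ← sum_sub_distrib]
      congr 1
      · apply sum_congr rfl
        intro t ht
        rw [Hn_top _ (show t ≤ n by simp at ht; omega)]
        ring
      · ring
    rw [Vn_tel q n n le_rfl, Hn_self] at h2
    rw [h1, On_succ]
    linear_combination (1 - q ^ (2*n+1)) * ih - h2

lemma Wn_dvd (n : ℕ) : q ^ n ∣ Wn q n := by
  apply dvd_sum
  intro t _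
  apply Dvd.dvd.mul_left
  apply pow_dvd_pow
  nlinarith

lemma Vn_dvd (n : ℕ) : q ^ n ∣ Vn q n - Hn (q ^ 2) 0 n := by
  cases n with
  | zero => simp
  | succ n =>
    rw [Vn, sum_range_succ']
    simp only [zero_mul, pow_zero, mul_one, On, range_zero, prod_empty, one_mul, add_sub_cancel_right]
    apply dvd_sum
    intro t _
    apply Dvd.dvd.mul_left
    apply pow_dvd_pow
    nlinarith

lemma Dn_mul_Hn (n : ℕ) : Dn q n * Hn q 0 n = Hn (q ^ 2) 0 n := by
  simp only [Dn, Hn, Nat.Ico_zero_eq_range, ← prod_mul_distrib]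
  apply prod_congr rfl
  intros; ring

lemma On_mul_Hn (n : ℕ) : On q n * Hn (q ^ 2) 0 n = Hn q 0 (2 * n) := by
  induction n with
  | zero => simp [On, Hn]
  | succ n ih =>
    rw [show 2 * (n + 1) = 2 * n + 1 + 1 by ring, Hn_top _ (by omega), Hn_top _ (by omega), Hn_top _ (by omega),
      ← ih, On_succ]
    ring
end finite

open PowerSeries PowerSeries.WithPiTopology Filter Topology

open Classical in
noncomputable def SS : PowerSeries ℤ := PowerSeries.mk fun n => if n ≠ 0 ∧ IsSquare n then (-1) ^ n else 0
open Classical in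
noncomputable def Psi : PowerSeries ℤ := PowerSeries.mk fun n => if ∃ s : ℕ, s * (s + 1) / 2 = n then 1 else 0
noncomputable def DD : PowerSeries ℤ := PowerSeries.mk fun n => (#(Nat.Partition.restricted n (¬ 2 ∣ ·)) : ℤ)
noncomputable def EE : PowerSeries ℤ := pentagonalSeries ℤ

lemma tendsto_Dn : Tendsto (fun n => Dn (X : PowerSeries ℤ) n) atTop (𝓝 DD) := by
  have h := (Nat.Partition.hasProd_powerSeriesMk_card_countRestricted ℤ (m := 2) (by norm_num)).tendsto_prod_nat
  rw [← Nat.Partition.powerSeriesMk_card_restricted_eq_powerSeriesMk_card_countRestricted ℤ (by norm_num)] at h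
  simpa [Dn, DD, sum_range_succ] using h

lemma tendsto_Hn : Tendsto (fun n => Hn (X : PowerSeries ℤ) 0 n) atTop (𝓝 EE) := by
  have h := (hasProd_one_sub_X_pow ℤ).tendsto_prod_nat
  simpa [Hn, EE] using h

lemma tendsto_dvd (f : ℕ → PowerSeries ℤ) (hf : ∀ n, X ^ n ∣ f n) : Tendsto f atTop (𝓝 0) := by
  rw [tendsto_iff_coeff_tendsto]
  intro d
  apply tendsto_atTop_of_eventually_const (i₀ := d + 1)
  intro n hn
  rw [map_zero]
  exact X_pow_dvd_iff.1 (hf n) d (by omega)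

lemma tendsto_phin : Tendsto (fun n => phin (X : PowerSeries ℤ) n) atTop (𝓝 (1 + 2 * SS)) := by
  have : Tendsto (fun n => ∑ s ∈ range n, (-1) ^ (s + 1) * (X : PowerSeries ℤ) ^ ((s + 1) ^ 2)) atTop (𝓝 SS) := by
    rw [tendsto_iff_coeff_tendsto]
    intro d
    apply tendsto_atTop_of_eventually_const (i₀ := d)
    intro n hn
    have e : ∀ s : ℕ, coeff d ((-1) ^ (s + 1) * (X : PowerSeries ℤ) ^ ((s + 1) ^ 2)) =
        if d = (s + 1) ^ 2 then (-1) ^ (s + 1) else 0 := by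
      intro s
      rw [show ((-1 : PowerSeries ℤ)) ^ (s + 1) = C ((-1) ^ (s + 1)) by simp, coeff_C_mul, coeff_X_pow]
      simp
    rw [map_sum, SS, coeff_mk]
    simp_rw [e]
    split_ifs with h
    · obtain ⟨h0, a, ha⟩ := h
      obtain ⟨s, rfl⟩ : ∃ s, a = s + 1 := Nat.exists_eq_succ_of_ne_zero (by rintro rfl; simp at ha; omega)
      rw [sum_eq_single s]
      · rw [if_pos (by rw [ha]; ring), ha]
        rcases Nat.even_or_odd (s + 1) with h | h
        · rw [h.neg_one_pow, (h.mul_left _).neg_one_pow]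
        · rw [h.neg_one_pow, (h.mul h).neg_one_pow]
      · intro b _ hb
        rw [if_neg]
        intro h
        apply hb
        have : (b + 1) ^ 2 = (s + 1) ^ 2 := by rw [← h, ha]; ring
        have := Nat.pow_left_injective (n := 2) (by norm_num) this
        omega
      · intro h
        simp at h
        nlinarith
    · apply sum_eq_zero
      intro s _
      rw [if_neg]
      rintro rfl
      exact h ⟨by positivity, (s + 1), by ring⟩
  exact (tendsto_const_nhds.add (tendsto_const_nhds.mul this))

lemma tri_inj {a b : ℕ} (h : a * (a + 1) / 2 = b * (b + 1) / 2) : a = b := by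
  have h1 := Nat.even_mul_succ_self a
  have h2 := Nat.even_mul_succ_self b
  have : a * (a + 1) = b * (b + 1) := by
    rw [← Nat.two_mul_div_two_of_even h1, ← Nat.two_mul_div_two_of_even h2, h]
  by_contra hne
  rcases lt_or_gt_of_ne hne with h | h <;> nlinarith

lemma tendsto_psin : Tendsto (fun n => psin (X : PowerSeries ℤ) n) atTop (𝓝 Psi) := by
  rw [tendsto_iff_coeff_tendsto]
  intro d
  apply tendsto_atTop_of_eventually_const (i₀ := d + 1)
  intro n hn
  rw [psin, map_sum, Psi, coeff_mk]
  simp_rw [coeff_X_pow]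
  split_ifs with h
  · obtain ⟨s, rfl⟩ := h
    rw [sum_eq_single s]
    · simp
    · intro b _ hb
      rw [if_neg]
      intro h
      exact hb (tri_inj h.symm)
    · intro h
      exfalso
      apply h
      simp
      have : s ≤ s * (s + 1) / 2 + 1 := by
        have h1 := Nat.two_mul_div_two_of_even (Nat.even_mul_succ_self s)
        have h2 := Nat.le_mul_self s
        rw [mul_add, mul_one] at h1 ⊢
        omega
      omega
  · apply sum_eq_zero
    intro s _
    rw [if_neg]
    rintro rfl
    exact h ⟨_, rfl⟩

lemma EE_ne : EE ≠ 0 := by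
  intro h
  have := coeff_pentagonalSeries_pentagonal ℤ 0
  rw [← EE, h] at this
  simp at this

lemma phi_id : DD * (1 + 2 * SS) = EE := by
  refine tendsto_nhds_unique (tendsto_Dn.mul tendsto_phin) ?_
  simp_rw [phi_finite]
  simpa using tendsto_Hn.add (tendsto_dvd _ (Wn_dvd X))

lemma psi_id : Psi = DD ^ 2 * EE := by
  have h : EE * Psi = (DD * EE) ^ 2 := by
    refine tendsto_nhds_unique ((tendsto_Hn.comp (tendsto_id.const_mul_atTop' (show 0 < 2 by norm_num))).mul tendsto_psin) ?_
    have : ∀ n, Hn (X : PowerSeries ℤ) 0 (2 * n) * psin X n = (Dn X n * Hn X 0 n) ^ 2 + (Dn X n * Hn X 0 n) * (Vn X n - Hn (X ^ 2) 0 n) := by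
      intro n
      rw [← On_mul_Hn, Dn_mul_Hn]
      linear_combination Hn (X ^ 2) 0 n * psi_finite (X : PowerSeries ℤ) n
    simp only [Function.comp, id, this]
    simpa using ((tendsto_Dn.mul tendsto_Hn).pow 2).add ((tendsto_Dn.mul tendsto_Hn).mul (tendsto_dvd _ (Vn_dvd X)))
  apply mul_left_cancel₀ EE_ne
  rw [h]; ring

lemma main_id : DD ^ 3 * (1 + 2 * SS) = Psi := by
  rw [psi_id, ← phi_id]; ring

lemma main_mod8 : DD ^ 3 = Psi - 2 * (Psi * SS) + 4 * (Psi * SS ^ 2) - 8 * (DD ^ 3 * SS ^ 3) := by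
  rw [← main_id]; ring

lemma A_sum (m : ℕ) (A : Finset (ℤ × ℤ))
    (hA : ∀ p, p ∈ A ↔ 0 < p.1 ∧ 3 ∣ p.1 + p.2 ∧ p.1 ^ 2 + 8 * p.2 ^ 2 = 8 * m + 1) :
    ∑ p ∈ A, (-1 : ℤ) ^ (p.2 ^ 2).toNat = 0 := by
  have key : ∀ p ∈ A, (8 * p.2 - p.1) / 3 * 3 = 8 * p.2 - p.1 ∧ (p.1 + p.2) / 3 * 3 = p.1 + p.2 := by
    intro p hp
    have := ((hA p).1 hp).2.1
    omega
  have odd : ∀ p ∈ A, p.1 % 2 = 1 := by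
    intro p hp
    have := ((hA p).1 hp).2.2
    by_contra h
    obtain ⟨c, hc⟩ : ∃ c, p.1 = 2 * c := ⟨p.1 / 2, by omega⟩
    rw [hc] at this
    ring_nf at this
    omega
  refine sum_involution (fun p _ => if 0 < (8 * p.2 - p.1) / 3 then ((8 * p.2 - p.1) / 3, (p.1 + p.2) / 3)
    else (-((8 * p.2 - p.1) / 3), -((p.1 + p.2) / 3))) ?_ ?_ ?_ ?_
  · intro p hp
    have h1 := key p hp
    have h2 := odd p hp
    have hpar : ∀ z : ℤ, (-1 : ℤ) ^ (z ^ 2).toNat = if z % 2 = 0 then 1 else -1 := by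
      intro z
      have : (-1 : ℤ) ^ (z ^ 2).toNat = (-1) ^ (z.natAbs * z.natAbs) := by
        congr 1
        zify
        rw [Int.toNat_of_nonneg (by positivity), abs_mul_abs_self]; ring
      rw [this]
      split_ifs with h
      · have h : Even z.natAbs := by rw [Nat.even_iff]; omega
        rw [(h.mul_left _).neg_one_pow]
      · have h : Odd z.natAbs := by rw [Nat.odd_iff]; omega
        rw [(h.mul h).neg_one_pow]
    rw [hpar, hpar]
    split_ifs <;> simp at * <;> omega
  · intro p hp _
    have h1 := key p hp
    have h2 := odd p hp
    intro h
    split_ifs at h <;> have := congrArg Prod.fst h <;> simp at this <;> omega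
  · intro p hp
    have h1 := key p hp
    have h2 := odd p hp
    have h3 := (hA p).1 hp
    rw [hA]
    generalize (8 * p.2 - p.1) / 3 = u at *
    generalize (p.1 + p.2) / 3 = v at *
    have h4 : u ^ 2 + 8 * v ^ 2 = 8 * m + 1 := by
      have : 9 * (u ^ 2 + 8 * v ^ 2) = 9 * (8 * (m : ℤ) + 1) := by
        linear_combination (u * 3 + 8 * p.2 - p.1) * h1.1 + 8 * (v * 3 + p.1 + p.2) * h1.2 + 9 * h3.2.2
      linarith
    split_ifs with h
    · refine ⟨h, ?_, h4⟩
      simp only; omega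
    · refine ⟨?_, ?_, by simpa using h4⟩ <;> simp only <;> omega
  · intro p hp
    have h1 := key p hp
    have h2 := odd p hp
    have h3 := (hA p).1 hp
    by_cases h : 0 < (8 * p.2 - p.1) / 3
    · simp only [if_pos h]
      split_ifs <;> ext <;> simp only <;> omega
    · simp only [if_neg h]
      split_ifs <;> ext <;> simp only <;> omega

lemma tri_sq {s i : ℕ} (h : s * (s + 1) / 2 = i) : (2 * s + 1) ^ 2 = 8 * i + 1 := by
  have h1 := Nat.two_mul_div_two_of_even (Nat.even_mul_succ_self s)
  rw [h] at h1
  nlinarith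

lemma mod9 (x y : ℤ) (n : ℕ) (h : x ^ 2 + 8 * y ^ 2 = 8 * (9 * n + 7 : ℕ) + 1) : ¬ (3 ∣ x ∧ 3 ∣ y) := by
  rintro ⟨⟨a, rfl⟩, ⟨b, rfl⟩⟩
  push_cast at h
  ring_nf at h
  omega

lemma coeff_PsiSS (n : ℕ) : coeff (9 * n + 7) (Psi * SS) = 0 := by
  classical
  set m := 9 * n + 7 with hm
  let A : Finset (ℤ × ℤ) := ((Icc (-(8 * m + 1 : ℤ)) (8 * m + 1)) ×ˢ (Icc (-(8 * m + 1 : ℤ)) (8 * m + 1))).filter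
    (fun p => 0 < p.1 ∧ 3 ∣ p.1 + p.2 ∧ p.1 ^ 2 + 8 * p.2 ^ 2 = 8 * m + 1)
  have hA : ∀ p, p ∈ A ↔ 0 < p.1 ∧ 3 ∣ p.1 + p.2 ∧ p.1 ^ 2 + 8 * p.2 ^ 2 = 8 * m + 1 := by
    intro p
    simp only [A, mem_filter, mem_product, mem_Icc, and_iff_right_iff_imp]
    rintro ⟨_, _, h⟩
    refine ⟨⟨?_, ?_⟩, ?_, ?_⟩ <;> nlinarith [sq_nonneg (p.1 + 1), sq_nonneg (p.1 - 1), sq_nonneg (p.2 + 1), sq_nonneg (p.2 - 1), sq_nonneg p.1, sq_nonneg p.2]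
  rw [coeff_mul, ← A_sum m A hA]
  symm
  have h8 : ∀ p ∈ A, ∃ k y : ℕ, p.1 = 2 * k + 1 ∧ p.2.natAbs = y ∧ k * (k + 1) / 2 + y ^ 2 = m ∧ (p.1 ^ 2 - 1) / 8 = (k * (k + 1) / 2 : ℕ) ∧ p.2 ^ 2 = (y ^ 2 : ℕ) ∧ y ≠ 0 := by
    intro p hp
    obtain ⟨h1, h2, h3⟩ := (hA p).1 hp
    have : p.1 % 2 = 1 := by
      by_contra h
      obtain ⟨c, hc⟩ : ∃ c, p.1 = 2 * c := ⟨p.1 / 2, by omega⟩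
      rw [hc] at h3
      ring_nf at h3
      omega
    obtain ⟨k, hk⟩ : ∃ k : ℕ, p.1 = 2 * k + 1 := ⟨(p.1 / 2).toNat, by omega⟩
    have h5 := tri_sq (s := k) rfl
    zify at h5
    have h6 : p.2 ^ 2 = (p.2.natAbs ^ 2 : ℕ) := by simp
    rw [← hk] at h5
    refine ⟨k, p.2.natAbs, hk, rfl, ?_, ?_, h6, ?_⟩
    · zify at h6 ⊢
      omega
    · push_cast; omega
    · intro h0
      have h0 : p.2 = 0 := by omega
      exact mod9 p.1 p.2 n h3 (by omega)
  refine sum_of_injOn (fun p => (((p.1 ^ 2 - 1) / 8).toNat, (p.2 ^ 2).toNat)) ?_ ?_ ?_ ?_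
  · intro p hp p' hp' h
    obtain ⟨k, y, h1, h2, h3, h4, h5, h6⟩ := h8 p hp
    obtain ⟨k', y', h1', h2', h3', h4', h5', h6'⟩ := h8 p' hp'
    simp only [h4, h5, h4', h5', Int.toNat_natCast, Prod.mk.injEq] at h
    have hk := tri_inj h.1
    have hy := Nat.pow_left_injective (n := 2) (by norm_num) h.2
    have ha := (hA p).1 hp
    have hb := (hA p').1 hp'
    have := mod9 p.1 p.2 n ha.2.2
    ext <;> omega
  · intro p hp
    obtain ⟨k, y, h1, h2, h3, h4, h5, h6⟩ := h8 p hp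
    simp only [h4, h5, Int.toNat_natCast, mem_coe, HasAntidiagonal.mem_antidiagonal, h3]
  · intro p hp hn
    by_contra hne
    apply hn
    rw [Psi, SS, coeff_mk, coeff_mk] at hne
    have a1 := left_ne_zero_of_mul hne
    have a2 := right_ne_zero_of_mul hne
    simp only [ne_eq, ite_eq_right_iff, Classical.not_imp] at a1 a2
    obtain ⟨⟨k, hk⟩, -⟩ := a1
    obtain ⟨⟨h0, y, hy⟩, -⟩ := a2
    have hs := tri_sq hk
    rw [HasAntidiagonal.mem_antidiagonal] at hp
    have e : (2 * k + 1 : ℤ) ^ 2 + 8 * (y : ℤ) ^ 2 = 8 * (m : ℕ) + 1 := by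
      zify at hs hp hy
      rw [hs, ← hp, hy]; ring
    have e3 := mod9 _ _ n e
    have e4 : (3 : ℤ) ∣ (2 * k + 1) + y ∨ (3 : ℤ) ∣ (2 * k + 1) + (-y) := by
      by_contra hh
      push Not at hh
      have q1 : ((2 * k + 1 : ℤ) ^ 2 + 8 * (y : ℤ) ^ 2) % 3 = 0 := by rw [e, hm]; push_cast; omega
      have q2 : (3 : ℤ) ∣ ((2 * k + 1) + y) * ((2 * k + 1) + (-y)) := by
        have : ((2 * k + 1 : ℤ) + y) * ((2 * k + 1) + (-y)) = ((2 * k + 1 : ℤ) ^ 2 + 8 * (y : ℤ) ^ 2) - 3 * (3 * y ^ 2) := by ring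
        rw [this]; omega
      rcases Int.prime_three.dvd_or_dvd q2 with h | h
      · exact hh.1 h
      · exact hh.2 h
    have hp1 : ∀ z : ℤ, z ^ 2 = (p.2 : ℤ) → (((2 * k + 1 : ℤ) ^ 2 - 1) / 8).toNat = p.1 ∧ (z ^ 2).toNat = p.2 := by
      intro z hz
      zify at hs
      rw [hs, hz]
      omega
    have hy' : (y : ℤ) ^ 2 = p.2 := by rw [hy]; push_cast; ring
    rcases e4 with h | h
    · refine ⟨(2 * k + 1, y), (hA _).2 ⟨by positivity, h, e⟩, ?_⟩
      ext
      · exact (hp1 y hy').1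
      · exact (hp1 y hy').2
    · refine ⟨(2 * k + 1, -y), (hA _).2 ⟨by positivity, h, by simpa using e⟩, ?_⟩
      ext
      · exact (hp1 y hy').1
      · exact (hp1 (-y) (by simpa using hy')).2
  · intro p hp
    obtain ⟨k, y, h1, h2, h3, h4, h5, h6⟩ := h8 p hp
    simp only [h4, h5, Int.toNat_natCast]
    rw [Psi, SS, coeff_mk, coeff_mk, if_pos ⟨k, rfl⟩, if_pos ⟨by positivity, y, by ring⟩, one_mul]

lemma coeff_Psi (n : ℕ) : coeff (9 * n + 7) Psi = 0 := by
  rw [Psi, coeff_mk, if_neg]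
  rintro ⟨k, hk⟩
  have hs := tri_sq hk
  have : (2 * k + 1) % 9 < 9 := Nat.mod_lt _ (by norm_num)
  have h2 : (2 * k + 1) ^ 2 % 9 = 3 := by rw [hs]; omega
  rw [Nat.pow_mod] at h2
  generalize (2 * k + 1) % 9 = r at *
  interval_cases r <;> simp at h2

lemma coeff_SS2 (d : ℕ) (h : ∀ a, d ≠ 2 * a ^ 2) : (2 : ℤ) ∣ coeff d (SS ^ 2) := by
  suffices hz : ((coeff d (SS ^ 2) : ℤ) : ZMod 2) = 0 by
    exact_mod_cast (ZMod.intCast_zmod_eq_zero_iff_dvd _ 2).1 hz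
  rw [pow_two, coeff_mul, Int.cast_sum]
  refine sum_involution (fun p _ => p.swap) ?_ ?_ ?_ ?_
  · intro p _
    simp only [Prod.fst_swap, Prod.snd_swap]
    rw [mul_comm (coeff p.2 SS)]
    exact CharTwo.add_self_eq_zero _
  · intro p hp hne heq
    have h1 : p.1 = p.2 := (congrArg Prod.fst heq).symm
    rw [HasAntidiagonal.mem_antidiagonal] at hp
    apply hne
    rw [SS, coeff_mk, if_neg, zero_mul, Int.cast_zero]
    rintro ⟨_, a, ha⟩
    exact h a (by rw [← hp, ← h1, ha]; ring)
  · intro p hp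
    rw [HasAntidiagonal.mem_antidiagonal] at hp ⊢
    simp only [Prod.fst_swap, Prod.snd_swap]; omega
  · intro p hp
    simp

lemma coeff_PsiSS2 (n : ℕ) : (2 : ℤ) ∣ coeff (9 * n + 7) (Psi * SS ^ 2) := by
  rw [coeff_mul]
  apply dvd_sum
  intro p hp
  rw [HasAntidiagonal.mem_antidiagonal] at hp
  by_cases h : ∃ k : ℕ, k * (k + 1) / 2 = p.1
  · apply Dvd.dvd.mul_left
    apply coeff_SS2
    rintro a ha
    obtain ⟨k, hk⟩ := h
    have hs := tri_sq hk
    have h2 : ((2 * k + 1) ^ 2 + 16 * a ^ 2) % 9 = 3 := by rw [hs]; omega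
    have l1 : (2 * k + 1) % 9 < 9 := Nat.mod_lt _ (by norm_num)
    have l2 : a % 9 < 9 := Nat.mod_lt _ (by norm_num)
    rw [Nat.add_mod, Nat.mul_mod, Nat.pow_mod, Nat.pow_mod a] at h2
    generalize (2 * k + 1) % 9 = r at *
    generalize a % 9 = r' at *
    clear hs hk ha hp
    interval_cases r <;> interval_cases r' <;> simp at h2
  · rw [Psi, coeff_mk, if_neg h, zero_mul]
    exact dvd_zero _

lemma dvd8 (n : ℕ) : (8 : ℤ) ∣ coeff (9 * n + 7) (DD ^ 3) := by
  rw [main_mod8]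
  obtain ⟨c, hc⟩ := coeff_PsiSS2 n
  have h2 : ∀ f : PowerSeries ℤ, coeff (9 * n + 7) (2 * f) = 2 * coeff (9 * n + 7) f := fun f => by
    rw [show (2 : PowerSeries ℤ) = C 2 by simp, coeff_C_mul]
  have h4 : ∀ f : PowerSeries ℤ, coeff (9 * n + 7) (4 * f) = 4 * coeff (9 * n + 7) f := fun f => by
    rw [show (4 : PowerSeries ℤ) = C 4 by simp, coeff_C_mul]
  have h8 : ∀ f : PowerSeries ℤ, coeff (9 * n + 7) (8 * f) = 8 * coeff (9 * n + 7) f := fun f => by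
    rw [show (8 : PowerSeries ℤ) = C 8 by simp, coeff_C_mul]
  rw [map_sub, map_add, map_sub, h2, h4, h8, coeff_Psi, coeff_PsiSS, hc]
  omega

lemma dvd3 (n : ℕ) : (3 : ℤ) ∣ coeff (9 * n + 7) (DD ^ 3) := by
  suffices hz : ((coeff (9 * n + 7) (DD ^ 3) : ℤ) : ZMod 3) = 0 by
    exact_mod_cast (ZMod.intCast_zmod_eq_zero_iff_dvd _ 3).1 hz
  have : Fact (Nat.Prime 3) := ⟨Nat.prime_three⟩
  have h1 : ((coeff (9 * n + 7) (DD ^ 3) : ℤ) : ZMod 3) =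
      coeff (9 * n + 7) ((PowerSeries.map (Int.castRingHom (ZMod 3)) DD) ^ 3) := by
    rw [← map_pow, coeff_map]; rfl
  have h2 : (PowerSeries.map (Int.castRingHom (ZMod 3)) DD) ^ 3 =
      PowerSeries.map (frobenius (ZMod 3) 3) (PowerSeries.expand 3 (by norm_num)
        (PowerSeries.map (Int.castRingHom (ZMod 3)) DD)) :=
    (MvPowerSeries.map_frobenius_expand (σ := Unit) 3 (by norm_num)).symm
  rw [h1, h2, coeff_map, coeff_expand_of_not_dvd, map_zero]
  omega

def Teq (n : ℕ) : {f : Fin 3 → Σ m : ℕ, Nat.Partition m //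
    (∑ i, (f i).1) = n ∧ ∀ i, ∀ p ∈ (f i).2.parts, ¬ 2 ∣ p} ≃
    Σ l : {l : Fin 3 → ℕ // l ∈ Finset.piAntidiag univ n},
      ∀ i, {p : Nat.Partition (l.1 i) // p ∈ Nat.Partition.restricted (l.1 i) (¬ 2 ∣ ·)} where
  toFun f := ⟨⟨fun i => (f.1 i).1, by simpa using f.2.1⟩, fun i => ⟨(f.1 i).2, by
    simpa [Nat.Partition.restricted] using f.2.2 i⟩⟩
  invFun g := ⟨fun i => ⟨g.1.1 i, (g.2 i).1⟩, (by have := mem_piAntidiag.1 g.1.2; exact this.1), fun i => by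
    simpa [Nat.Partition.restricted] using (g.2 i).2⟩
  left_inv f := rfl
  right_inv g := rfl

lemma Tcount_eq (n : ℕ) : (Tcount 2 3 n : ℤ) = coeff n (DD ^ 3) := by
  have h : DD ^ 3 = ∏ i : Fin 3, DD := by simp
  rw [h, coeff_prod, Tcount, Nat.card_congr (Teq n), Nat.card_sigma]
  simp_rw [Nat.card_pi, Nat.card_eq_fintype_card, Fintype.card_coe]
  push_cast
  rw [Finset.sum_coe_sort (Finset.piAntidiag univ n) (fun l : Fin 3 → ℕ => ∏ i, ((#(Nat.Partition.restricted (l i) (¬ 2 ∣ ·)) : ℕ) : ℤ))]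
  symm
  refine sum_nbij' (fun l => ⇑l) (fun l => Finsupp.equivFunOnFinite.symm l) ?_ ?_ ?_ ?_ ?_
  · intro l hl
    simpa using hl
  · intro l hl
    simpa using hl
  · intro l hl
    ext; simp
  · intro l hl
    ext; simp
  · intro l _
    simp [DD]

theorem stmt4 (n : ℕ) : 24 ∣ Tcount 2 3 (9 * n + 7) := by
  have h3 := dvd3 n
  have h8 := dvd8 n
  rw [← Tcount_eq] at h3 h8
  omega
end

section
/- For all n ≥ 0, T_2(3n+1) ≡ T_2(243n+91) (mod 24), and 3·T_2(3n+1) ≡ T_2(27n+10) (mod 24). -/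
open Finset

section JTP
variable {R : Type*} [CommRing R]

def qP (Q : R) (n : ℕ) : R := ∏ i ∈ range n, (1 - Q ^ (i + 1))

lemma qP_succ (Q : R) (n : ℕ) : qP Q (n + 1) = qP Q n * (1 - Q ^ (n + 1)) := by
  simp [qP, prod_range_succ]

lemma qP_zero (Q : R) : qP Q 0 = 1 := by simp [qP]

lemma qP_unit {Q : R} {K : ℕ} (hQ : Q ^ K = 0) (n : ℕ) : IsUnit (qP Q n) := by
  induction n with
  | zero => simp [qP_zero]
  | succ n ih =>
    rw [qP_succ]
    refine ih.mul (IsNilpotent.isUnit_one_sub ⟨K, ?_⟩)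
    rw [← pow_mul, mul_comm, pow_mul, hQ, zero_pow (by omega)]

lemma qP_stable {Q : R} {K : ℕ} (hQ : Q ^ K = 0) {n : ℕ} (hn : K ≤ n) : qP Q n = qP Q K := by
  induction n, hn using Nat.le_induction with
  | base => rfl
  | succ n hn ih =>
    rw [qP_succ, ih, pow_eq_zero_of_le (by omega : K ≤ n + 1) hQ]; ring

def qC (Q : R) : ℕ → ℤ → R
  | 0, i => if i = 0 then 1 else 0
  | n + 1, i => (1 + Q ^ (2 * n + 1)) * qC Q n i + Q ^ (n - i + 1).toNat * qC Q n (i - 1)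
      + Q ^ (n + i + 1).toNat * qC Q n (i + 1)

lemma qC_zero (Q : R) (n : ℕ) (i : ℤ) (h : (n : ℤ) < |i|) : qC Q n i = 0 := by
  induction n generalizing i with
  | zero =>
    have : i ≠ 0 := by rintro rfl; simp at h
    simp [qC, this]
  | succ n ih =>
    rw [qC, ih i (by grind), ih (i - 1) (by grind), ih (i + 1) (by grind)]; ring

lemma qC_mul (Q : R) (n u v : ℕ) (h : u + v = 2 * n) :
    qC Q n ((u : ℤ) - n) * qP Q u * qP Q v = qP Q (2 * n) := by
  induction n generalizing u v with
  | zero =>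
    obtain ⟨rfl, rfl⟩ : u = 0 ∧ v = 0 := by omega
    simp [qC, qP_zero]
  | succ n ih =>
    rcases Nat.eq_zero_or_pos u with rfl | hu
    · obtain rfl : v = 2 * n + 2 := by omega
      rw [qC, qC_zero Q n _ (by grind), qC_zero Q n (_ - 1) (by grind)]
      have h1 := ih 0 (2 * n) (by omega)
      have e1 : ((0 : ℕ) : ℤ) - ((n + 1 : ℕ) : ℤ) + 1 = ((0 : ℕ) : ℤ) - n := by push_cast; ring
      have e2 : ((n : ℤ) + (((0 : ℕ) : ℤ) - ((n + 1 : ℕ) : ℤ)) + 1).toNat = 0 := by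
        push_cast; omega
      rw [e1, e2, qP_succ, qP_succ, show 2 * (n + 1) = 2 * n + 1 + 1 by ring, qP_succ, qP_succ]
      linear_combination (1 - Q ^ (2 * n + 1)) * (1 - Q ^ (2 * n + 1 + 1)) * h1
    rcases Nat.eq_zero_or_pos v with rfl | hv
    · obtain rfl : u = 2 * n + 2 := by omega
      rw [qC, qC_zero Q n _ (by grind), qC_zero Q n (_ + 1) (by grind)]
      have h1 := ih (2 * n) 0 (by omega)
      have e1 : ((2 * n + 2 : ℕ) : ℤ) - ((n + 1 : ℕ) : ℤ) - 1 = ((2 * n : ℕ) : ℤ) - n := by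
        push_cast; ring
      have e2 : ((n : ℤ) - (((2 * n + 2 : ℕ) : ℤ) - ((n + 1 : ℕ) : ℤ)) + 1).toNat = 0 := by
        push_cast; omega
      rw [e1, e2, qP_succ, qP_succ, show 2 * (n + 1) = 2 * n + 1 + 1 by ring, qP_succ, qP_succ]
      linear_combination (1 - Q ^ (2 * n + 1)) * (1 - Q ^ (2 * n + 1 + 1)) * h1
    obtain ⟨u, rfl⟩ : ∃ w, u = w + 1 := ⟨u - 1, by omega⟩
    obtain ⟨v, rfl⟩ : ∃ w, v = w + 1 := ⟨v - 1, by omega⟩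
    have huv : u + v = 2 * n := by omega
    have e0 : ((u + 1 : ℕ) : ℤ) - ((n + 1 : ℕ) : ℤ) = (u : ℤ) - n := by push_cast; ring
    have ea : ((n : ℤ) - ((u : ℤ) - n) + 1).toNat = v + 1 := by omega
    have eb : ((n : ℤ) + ((u : ℤ) - n) + 1).toNat = u + 1 := by omega
    rw [e0, qC, ea, eb]
    have h0 : qC Q n ((u : ℤ) - n) * qP Q (u + 1) * qP Q (v + 1)
        = (1 - Q ^ (u + 1)) * (1 - Q ^ (v + 1)) * qP Q (2 * n) := by
      rw [qP_succ, qP_succ]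
      linear_combination (1 - Q ^ (u + 1)) * (1 - Q ^ (v + 1)) * ih u v huv
    have h1 : qC Q n ((u : ℤ) - n - 1) * qP Q (u + 1) * qP Q (v + 1)
        = (1 - Q ^ u) * (1 - Q ^ (u + 1)) * qP Q (2 * n) := by
      rcases Nat.eq_zero_or_pos u with rfl | hu
      · rw [qC_zero Q n _ (by grind)]; simp
      · obtain ⟨u, rfl⟩ : ∃ w, u = w + 1 := ⟨u - 1, by omega⟩
        have := ih u (v + 1) (by omega)
        rw [show ((u + 1 : ℕ) : ℤ) - n - 1 = (u : ℤ) - n by push_cast; ring, qP_succ Q (u + 1),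
          qP_succ Q u]
        linear_combination (1 - Q ^ (u + 1)) * (1 - Q ^ (u + 1 + 1)) * this
    have h2 : qC Q n ((u : ℤ) - n + 1) * qP Q (u + 1) * qP Q (v + 1)
        = (1 - Q ^ v) * (1 - Q ^ (v + 1)) * qP Q (2 * n) := by
      rcases Nat.eq_zero_or_pos v with rfl | hv
      · rw [qC_zero Q n _ (by grind)]; simp
      · obtain ⟨v, rfl⟩ : ∃ w, v = w + 1 := ⟨v - 1, by omega⟩
        have := ih (u + 1) v (by omega)
        rw [show (u : ℤ) - n + 1 = ((u + 1 : ℕ) : ℤ) - n by push_cast; ring, qP_succ Q (v + 1),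
          qP_succ Q v]
        linear_combination (1 - Q ^ (v + 1)) * (1 - Q ^ (v + 1 + 1)) * this
    rw [show 2 * (n + 1) = 2 * n + 1 + 1 by ring, qP_succ Q (2 * n + 1), qP_succ Q (2 * n)]
    have hq : Q ^ (2 * n) = Q ^ u * Q ^ v := by rw [← huv, pow_add]
    have hq1 : Q ^ (2 * n + 1) = Q ^ u * Q ^ v * Q := by rw [pow_succ, hq]
    have hq2 : Q ^ (2 * n + 1 + 1) = Q ^ u * Q ^ v * Q * Q := by rw [pow_succ, hq1]
    have hu1 := pow_succ Q u
    have hv1 := pow_succ Q v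
    calc _ = (1 + Q ^ (2 * n + 1)) * (qC Q n ((u : ℤ) - n) * qP Q (u + 1) * qP Q (v + 1))
          + Q ^ (v + 1) * (qC Q n ((u : ℤ) - n - 1) * qP Q (u + 1) * qP Q (v + 1))
          + Q ^ (u + 1) * (qC Q n ((u : ℤ) - n + 1) * qP Q (u + 1) * qP Q (v + 1)) := by ring
      _ = _ := by
        rw [h0, h1, h2, hq1, hq2, hu1, hv1]; ring

lemma qC_inv {Q : R} {K : ℕ} (hQ : Q ^ K = 0) (n : ℕ) (i : ℤ) (h : |i| + K ≤ n) :
    qC Q n i * qP Q K = 1 := by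
  have hm := qC_mul Q n (n + i).toNat (n - i).toNat (by grind)
  rw [show (((n + i).toNat : ℕ) : ℤ) - n = i by grind, qP_stable hQ (by grind),
    qP_stable (n := (n - i).toNat) hQ (by grind), qP_stable (n := 2 * n) hQ (by grind)] at hm
  have hu := qP_unit hQ K
  apply hu.mul_right_cancel
  rw [hm, one_mul]

def qe (Q a b : R) (i : ℤ) : R := a ^ i.toNat * b ^ (-i).toNat * Q ^ (i.natAbs.choose 2)

lemma qe_up {Q a b : R} (hab : a * b = Q) (n : ℕ) (i : ℤ) (h : |i| ≤ n) :
    a * Q ^ n * qe Q a b i = Q ^ (n - i).toNat * qe Q a b (i + 1) := by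
  unfold qe
  rcases le_or_gt 0 i with h0 | h0
  · lift i to ℕ using h0
    have hi : i ≤ n := by simpa using h
    obtain ⟨d, rfl⟩ := Nat.exists_eq_add_of_le hi
    have e1 : ((i : ℤ)).toNat = i := by simp
    have e2 : (-(i : ℤ)).toNat = 0 := by omega
    have e3 : ((i : ℤ) + 1).toNat = i + 1 := by omega
    have e4 : (-((i : ℤ) + 1)).toNat = 0 := by omega
    have e5 : (((i + d : ℕ) : ℤ) - i).toNat = d := by omega
    have e6 : ((i : ℤ) + 1).natAbs = i + 1 := by omega
    rw [e1, e2, e3, e4, e5, e6, Int.natAbs_natCast, Nat.choose_succ_succ' i 1, Nat.choose_one_right]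
    ring
  · obtain ⟨k, rfl⟩ : ∃ k : ℕ, i = -(k + 1 : ℤ) := ⟨(-i - 1).toNat, by omega⟩
    have e1 : (-(k + 1 : ℤ)).toNat = 0 := by omega
    have e2 : (-(-(k + 1 : ℤ))).toNat = k + 1 := by omega
    have e3 : (-(k + 1 : ℤ) + 1).toNat = 0 := by omega
    have e4 : (-(-(k + 1 : ℤ) + 1)).toNat = k := by omega
    have e5 : ((n : ℤ) - (-(k + 1 : ℤ))).toNat = n + k + 1 := by omega
    have e6 : (-(k + 1 : ℤ)).natAbs = k + 1 := by omega
    have e7 : (-(k + 1 : ℤ) + 1).natAbs = k := by omega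
    rw [e1, e2, e3, e4, e5, e6, e7, Nat.choose_succ_succ' k 1, Nat.choose_one_right]
    simp only [pow_add, pow_one, pow_zero]
    linear_combination b ^ k * Q ^ n * Q ^ k * Q ^ (k.choose 2) * hab

lemma qe_neg (Q a b : R) (i : ℤ) : qe Q a b (-i) = qe Q b a i := by
  simp only [qe, neg_neg, Int.natAbs_neg]; ring

lemma qe_down {Q a b : R} (hab : a * b = Q) (n : ℕ) (i : ℤ) (h : |i| ≤ n) :
    b * Q ^ n * qe Q a b i = Q ^ (n + i).toNat * qe Q a b (i - 1) := by
  have := qe_up (Q := Q) (a := b) (b := a) (by rw [mul_comm]; exact hab) n (-i) (by simpa using h)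
  rw [qe_neg, show -i + 1 = -(i - 1) by ring, qe_neg] at this
  simpa using this

lemma qF_eq {Q a b : R} (hab : a * b = Q) (n : ℕ) :
    (∏ i ∈ range n, (1 + a * Q ^ i)) * (∏ i ∈ range n, (1 + b * Q ^ i))
      = ∑ i ∈ Icc (-n : ℤ) n, qC Q n i * qe Q a b i := by
  induction n with
  | zero => simp [qC, qe]
  | succ n ih =>
    rw [prod_range_succ, prod_range_succ]
    have h0 : ∑ i ∈ Icc (-n : ℤ) n, qC Q n i * qe Q a b i
        = ∑ i ∈ Icc (-(n + 1 : ℕ) : ℤ) (n + 1 : ℕ), qC Q n i * qe Q a b i := by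
      apply sum_subset
      · intro i; simp only [mem_Icc]; omega
      · intro i _ hi
        rw [qC_zero Q n i (by simp only [mem_Icc] at hi; grind), zero_mul]
    have h1 : ∑ i ∈ Icc (-n : ℤ) n, a * Q ^ n * (qC Q n i * qe Q a b i)
        = ∑ i ∈ Icc (-(n + 1 : ℕ) : ℤ) (n + 1 : ℕ),
          Q ^ (n - i + 1).toNat * qC Q n (i - 1) * qe Q a b i := by
      have : ∑ i ∈ Icc (-n : ℤ) n, a * Q ^ n * (qC Q n i * qe Q a b i)
        = ∑ i ∈ Icc (-n + 1 : ℤ) (n + 1),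
          Q ^ (n - i + 1).toNat * qC Q n (i - 1) * qe Q a b i := by
        rw [← Finset.map_add_right_Icc, sum_map]
        apply sum_congr rfl
        intro i hi
        simp only [mem_Icc] at hi
        have := qe_up hab n i (by grind)
        simp only [addRightEmbedding_apply]
        rw [show (n : ℤ) - (i + 1) + 1 = n - i by ring, show i + 1 - 1 = i by ring]
        linear_combination qC Q n i * this
      rw [this]
      apply sum_subset
      · intro i; simp only [mem_Icc]; omega
      · intro i hi' hi
        simp only [mem_Icc] at hi hi'
        rw [qC_zero Q n (i - 1) (by grind)]; ring
    have h2 : ∑ i ∈ Icc (-n : ℤ) n, b * Q ^ n * (qC Q n i * qe Q a b i)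
        = ∑ i ∈ Icc (-(n + 1 : ℕ) : ℤ) (n + 1 : ℕ),
          Q ^ (n + i + 1).toNat * qC Q n (i + 1) * qe Q a b i := by
      have : ∑ i ∈ Icc (-n : ℤ) n, b * Q ^ n * (qC Q n i * qe Q a b i)
        = ∑ i ∈ Icc (-n + -1 : ℤ) (n + -1),
          Q ^ (n + i + 1).toNat * qC Q n (i + 1) * qe Q a b i := by
        rw [← Finset.map_add_right_Icc, sum_map]
        apply sum_congr rfl
        intro i hi
        simp only [mem_Icc] at hi
        have := qe_down hab n i (by grind)
        simp only [addRightEmbedding_apply]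
        rw [show (n : ℤ) + (i + -1) + 1 = n + i by ring, show i + -1 + 1 = i by ring,
          ← sub_eq_add_neg]
        linear_combination qC Q n i * this
      rw [this]
      apply sum_subset
      · intro i; simp only [mem_Icc]; omega
      · intro i hi' hi
        simp only [mem_Icc] at hi hi'
        rw [qC_zero Q n (i + 1) (by grind)]; ring
    rw [← mul_sum] at h1 h2
    simp only [qC]
    simp only [add_mul _ _ (qe Q a b _), sum_add_distrib]
    rw [← h1, ← h2]
    simp only [mul_assoc]
    rw [← mul_sum, ← h0]
    rw [← ih]
    have hq : a * Q ^ n * (b * Q ^ n) = Q ^ (2 * n + 1) := by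
      rw [← hab]; ring
    linear_combination ((∏ i ∈ range n, (1 + a * Q ^ i)) * (∏ i ∈ range n, (1 + b * Q ^ i))) * hq

lemma jtp {Q a b : R} (hab : a * b = Q) {K : ℕ} (hQ : Q ^ K = 0) {n : ℕ} (hn : 2 * K + 1 ≤ n) :
    (∏ i ∈ range n, (1 + a * Q ^ i)) * (∏ i ∈ range n, (1 + b * Q ^ i)) * qP Q K
      = ∑ i ∈ Icc (-n : ℤ) n, qe Q a b i := by
  rw [qF_eq hab, sum_mul]
  apply sum_congr rfl
  intro i hi
  by_cases h : |i| + K ≤ n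
  · linear_combination qe Q a b i * qC_inv hQ n i h
  · have : qe Q a b i = 0 := by
      have hk : K + 2 ≤ i.natAbs := by grind
      have : K ≤ i.natAbs.choose 2 := by
        refine le_trans ?_ (Nat.choose_le_choose 2 hk)
        rw [Nat.choose_succ_succ' (K + 1) 1, Nat.choose_one_right]; omega
      rw [qe, pow_eq_zero_of_le this hQ, mul_zero]
    rw [this]; ring

end JTP
section Gauss
variable {S : Type*} [CommRing S]

/-- sign (-1)^m -/
def sg (m : ℤ) : ℤ := if m % 2 = 0 then 1 else -1

lemma sg_natAbs (m : ℤ) : (-1 : S) ^ m.natAbs = (sg m : S) := by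
  unfold sg
  split_ifs with h
  · rw [Even.neg_one_pow (by rw [Int.natAbs_even, Int.even_iff]; exact h)]; simp
  · rw [Odd.neg_one_pow (by rw [Int.natAbs_odd, Int.odd_iff]; omega)]; simp

lemma two_choose (k : ℕ) : k + 2 * k.choose 2 = k ^ 2 := by
  rw [Nat.choose_two_right, Nat.mul_div_cancel' (Nat.even_mul_pred_self k).two_dvd]
  cases k with
  | zero => rfl
  | succ k => simp; ring

noncomputable def theta (x : S) (n : ℕ) : S := ∑ i ∈ Icc (-n : ℤ) n, (sg i : S) * x ^ (i.natAbs ^ 2)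

lemma gauss {x : S} {K : ℕ} (hx : x ^ K = 0) {n : ℕ} (hn : 2 * K + 1 ≤ n) :
    theta x n * qP (x ^ 2) K = qP x K ^ 2 := by
  have hQ : (x ^ 2) ^ K = 0 := by rw [← pow_mul, mul_comm, pow_mul, hx]; ring
  have h := jtp (Q := x ^ 2) (a := -x) (b := -x) (by ring) hQ hn
  have e : ∀ i : ℤ, qe (x ^ 2) (-x) (-x) i = (sg i : S) * x ^ (i.natAbs ^ 2) := by
    intro i
    rw [qe, ← pow_add, show i.toNat + (-i).toNat = i.natAbs by omega, ← pow_mul, neg_pow,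
      mul_assoc, ← pow_add, two_choose, sg_natAbs]
  simp only [e] at h
  have h2 : ∀ m : ℕ, (∏ i ∈ range m, (1 + -x * (x ^ 2) ^ i)) * qP (x ^ 2) m = qP x (2 * m) := by
    intro m
    induction m with
    | zero => simp [qP]
    | succ m ih =>
      rw [prod_range_succ, qP_succ, show 2 * (m + 1) = 2 * m + 1 + 1 by ring, qP_succ, qP_succ, ← ih]
      ring
  have h3 := h2 n
  rw [qP_stable hQ (by omega), qP_stable (n := 2 * n) hx (by omega)] at h3
  rw [theta, ← h, ← h3]; ring

lemma theta_form (x : S) (n : ℕ) : ∃ w, theta x n = 1 + 2 * w := by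
  induction n with
  | zero => exact ⟨0, by simp [theta, sg]⟩
  | succ n ih =>
    obtain ⟨w, hw⟩ := ih
    refine ⟨w + (sg (n + 1) : S) * x ^ ((n + 1) ^ 2), ?_⟩
    have : Icc (-(n + 1 : ℕ) : ℤ) (n + 1 : ℕ)
        = insert (-(n + 1 : ℤ)) (insert (n + 1 : ℤ) (Icc (-n : ℤ) n)) := by
      ext i; simp only [mem_Icc, mem_insert]; omega
    rw [theta, this, sum_insert, sum_insert, ← theta, hw]
    · have e1 : sg (-(n + 1 : ℤ)) = sg (n + 1) := by unfold sg; grind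
      have e2 : (-(n + 1 : ℤ)).natAbs = n + 1 := by omega
      have e3 : ((n + 1 : ℤ)).natAbs = n + 1 := by omega
      rw [e1, e2, e3]; ring
    · simp
    · simp only [mem_Icc, mem_insert]; omega

open scoped DualNumber in
lemma jacobi_aux {x : S} {K : ℕ} (hx : x ^ K = 0) {n : ℕ} (hn : 2 * K + 1 ≤ n) :
    qP x K ^ 3 = ∑ i ∈ Icc (-n : ℤ) n, ((-sg i * i : ℤ) : S) * x ^ (i.toNat.choose 2 + ((-i).toNat + 1).choose 2) := by
  set q : DualNumber S := TrivSqZeroExt.inl x with hq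
  have hqk : ∀ k, q ^ k = TrivSqZeroExt.inl (x ^ k) := fun k => by simp [hq]
  have hinl : ∀ k : ℕ, (TrivSqZeroExt.inl ((-1 : S) ^ k) : DualNumber S) = (-1) ^ k := fun k => by
    rw [← TrivSqZeroExt.inl_pow, TrivSqZeroExt.inl_neg, TrivSqZeroExt.inl_one]
  have hQ : q ^ K = 0 := by rw [hqk, hx]; simp
  have hep : (DualNumber.eps : DualNumber S) * DualNumber.eps = 0 := DualNumber.eps_mul_eps
  set ep : DualNumber S := DualNumber.eps with hepd
  have h := jtp (Q := q) (a := -(1 - ep)) (b := -(1 + ep) * q)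
    (by linear_combination -q * hep) hQ hn
  have h' := congrArg TrivSqZeroExt.snd h
  have pw1 : ∀ k : ℕ, (-(1 - ep)) ^ k = (-1) ^ k * (1 - k * ep) := by
    intro k
    induction k with
    | zero => simp
    | succ k ih => rw [pow_succ, ih, pow_succ]; push_cast; linear_combination (-(-1) ^ k * k) * hep
  have pw2 : ∀ k : ℕ, (-(1 + ep)) ^ k = (-1) ^ k * (1 + k * ep) := by
    intro k
    induction k with
    | zero => simp
    | succ k ih => rw [pow_succ, ih, pow_succ]; push_cast; linear_combination (-(-1) ^ k * k) * hep
  have e : ∀ i : ℤ, TrivSqZeroExt.snd (qe q (-(1 - ep)) (-(1 + ep) * q) i)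
      = ((-sg i * i : ℤ) : S) * x ^ (i.toNat.choose 2 + ((-i).toNat + 1).choose 2) := by
    intro i
    have key : qe q (-(1 - ep)) (-(1 + ep) * q) i
        = TrivSqZeroExt.inl ((-1) ^ i.natAbs * x ^ (i.toNat.choose 2 + ((-i).toNat + 1).choose 2)) *
          (1 - TrivSqZeroExt.inl (i : S) * ep) := by
      rw [qe, mul_pow, pw1, pw2]
      rcases le_or_gt 0 i with h0 | h0
      · lift i to ℕ using h0
        have e2 : (-(i : ℤ)).toNat = 0 := by omega
        rw [e2]
        simp [hqk, hinl]
        ring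
      · obtain ⟨k, rfl⟩ : ∃ k : ℕ, i = -(k : ℤ) := ⟨(-i).toNat, by omega⟩
        have e2 : (-(k : ℤ)).toNat = 0 := by omega
        rw [e2, Nat.choose_succ_succ' _ 1, Nat.choose_one_right]
        simp [hqk, hinl, pow_add]
        ring
    rw [key, sg_natAbs]
    simp [hepd]
    ring
  rw [TrivSqZeroExt.snd_sum] at h'
  simp only [e] at h'
  rw [← h']
  obtain ⟨n, rfl⟩ : ∃ m, n = m + 1 := ⟨n - 1, by omega⟩
  rw [prod_range_succ']
  have : (1 : DualNumber S) + -(1 - ep) * q ^ 0 = ep := by ring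
  rw [this, mul_comm _ ep, mul_assoc, mul_assoc]
  have hs : ∀ r : DualNumber S, TrivSqZeroExt.snd (ep * r) = TrivSqZeroExt.fst r := by
    intro r; simp [hepd]
  rw [hs]
  set F : DualNumber S →+* S := (TrivSqZeroExt.fstHom S S S).toRingHom with hF
  have hFf : ∀ r, TrivSqZeroExt.fst r = F r := fun r => rfl
  have hFq : F q = x := by simp [← hFf, hq]
  have hFe : F ep = 0 := by simp [← hFf, hepd]
  rw [hFf, map_mul, map_mul, map_prod, map_prod]
  have hP : F (qP q K) = qP x K := by simp [qP, map_prod, hFq]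
  have h1 : ∏ i ∈ range n, F (1 + -(1 - ep) * q ^ (i + 1)) = qP x n := by
    simp [qP, hFq, hFe, sub_eq_add_neg]
  have h2 : ∏ i ∈ range (n + 1), F (1 + -(1 + ep) * q * q ^ i) = qP x (n + 1) := by
    simp only [qP, map_add, map_mul, map_neg, map_one, map_pow, hFq, hFe]
    apply prod_congr rfl; intro i _; ring
  rw [hP, h1, h2, qP_stable (n := n) hx (by omega), qP_stable (n := n + 1) hx (by omega)]
  ring

noncomputable def jac (x : S) (M : ℕ) : S := ∑ j ∈ Icc (-M : ℤ) M, ((4 * j + 1 : ℤ) : S) * x ^ (2 * j ^ 2 + j).toNat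

lemma exp_eq (i : ℤ) : (((i.toNat.choose 2 + ((-i).toNat + 1).choose 2 : ℕ) : ℤ)) * 2 = i * (i - 1) := by
  have t : ∀ k : ℕ, ((k.choose 2 : ℕ) : ℤ) * 2 = k * (k - 1) := by
    intro k
    have := two_choose k
    zify at this; linarith
  rcases le_or_gt 0 i with h0 | h0
  · lift i to ℕ using h0
    have e2 : (-(i : ℤ)).toNat = 0 := by omega
    rw [e2]; push_cast; simp [t]
  · obtain ⟨k, rfl⟩ : ∃ k : ℕ, i = -(k : ℤ) := ⟨(-i).toNat, by omega⟩
    have e2 : (-(k : ℤ)).toNat = 0 := by omega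
    rw [e2]
    have := t (k + 1)
    push_cast at this ⊢
    simp
    linarith

lemma jacobi {x : S} {K : ℕ} (hx : x ^ K = 0) {M : ℕ} (hM : K + 1 ≤ M) :
    qP x K ^ 3 = jac x M := by
  rw [jacobi_aux hx (n := 2 * M) (by omega)]
  set g : ℤ → S := fun i => ((-sg i * i : ℤ) : S) * x ^ (i.toNat.choose 2 + ((-i).toNat + 1).choose 2) with hg
  have hA : ∑ i ∈ Icc (-(2 * M : ℕ) : ℤ) (2 * M : ℕ), g i = ∑ i ∈ Icc (-(2 * M : ℕ) : ℤ) (2 * M + 1 : ℕ), g i := by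
    apply sum_subset
    · intro i; simp only [mem_Icc]; omega
    · intro i hi hi'
      simp only [mem_Icc] at hi hi'
      have hi2 : i = 2 * M + 1 := by omega
      have : K ≤ i.toNat.choose 2 + ((-i).toNat + 1).choose 2 := by
        have := exp_eq i
        zify
        rw [hi2] at this ⊢
        push_cast at this ⊢
        nlinarith
      simp only [hg]
      rw [pow_eq_zero_of_le this hx, mul_zero]
  change ∑ i ∈ Icc (-(2 * M : ℕ) : ℤ) (2 * M : ℕ), g i = _
  rw [hA, ← sum_filter_add_sum_filter_not _ (fun i : ℤ => i % 2 = 0)]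
  have hB : ∑ i ∈ Icc (-(2 * M : ℕ) : ℤ) (2 * M + 1 : ℕ) with i % 2 = 0, g i = ∑ j ∈ Icc (-M : ℤ) M, g (-2 * j) := by
    symm
    apply sum_nbij' (fun j => -2 * j) (fun i => -(i / 2))
    · intro j hj; simp only [mem_Icc, mem_filter] at *; omega
    · intro j hj; simp only [mem_Icc, mem_filter] at *; omega
    · intro j hj; simp only [mem_Icc, mem_filter] at *; omega
    · intro j hj; simp only [mem_Icc, mem_filter] at *; omega
    · intro j hj; rfl
  have hC : ∑ i ∈ Icc (-(2 * M : ℕ) : ℤ) (2 * M + 1 : ℕ) with ¬ i % 2 = 0, g i = ∑ j ∈ Icc (-M : ℤ) M, g (2 * j + 1) := by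
    symm
    apply sum_nbij' (fun j => 2 * j + 1) (fun i => i / 2)
    · intro j hj; simp only [mem_Icc, mem_filter] at *; omega
    · intro j hj; simp only [mem_Icc, mem_filter] at *; omega
    · intro j hj; simp only [mem_Icc, mem_filter] at *; omega
    · intro j hj; simp only [mem_Icc, mem_filter] at *; omega
    · intro j hj; rfl
  rw [hB, hC, ← sum_add_distrib, jac]
  apply sum_congr rfl
  intro j _
  have h1 := exp_eq (-2 * j)
  have h2 := exp_eq (2 * j + 1)
  have e1 : (-2 * j).toNat.choose 2 + ((-(-2 * j)).toNat + 1).choose 2 = (2 * j ^ 2 + j).toNat := by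
    have : (2 * j ^ 2 + j) * 2 = -2 * j * (-2 * j - 1) := by ring
    rw [← this] at h1
    omega
  have e2 : (2 * j + 1).toNat.choose 2 + ((-(2 * j + 1)).toNat + 1).choose 2 = (2 * j ^ 2 + j).toNat := by
    have : (2 * j ^ 2 + j) * 2 = (2 * j + 1) * (2 * j + 1 - 1) := by ring
    rw [← this] at h2
    omega
  have s1 : sg (-2 * j) = 1 := by unfold sg; grind
  have s2 : sg (2 * j + 1) = -1 := by unfold sg; grind
  simp only [hg]
  rw [e1, e2, s1, s2]; push_cast; ring

end Gauss
section Arith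

noncomputable def sol (N : ℕ) : Finset (ℤ × ℤ) :=
  (Icc (-N : ℤ) N ×ˢ Icc (-N : ℤ) N).filter (fun p => 2 * p.1 ^ 2 + p.1 + p.2 ^ 2 = N)

lemma bound_sol {N : ℕ} {j m : ℤ} (h : 2 * j ^ 2 + j + m ^ 2 = N) :
    -(N : ℤ) ≤ j ∧ j ≤ N ∧ -(N : ℤ) ≤ m ∧ m ≤ N := by
  have hm : 0 ≤ m ^ 2 := sq_nonneg m
  have hj : 0 ≤ 2 * j ^ 2 + j := by
    rcases le_or_gt 0 j with h0 | h0 <;> nlinarith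
  refine ⟨?_, ?_, ?_, ?_⟩
  · rcases le_or_gt 0 j with h0 | h0 <;> nlinarith
  · rcases le_or_gt 0 j with h0 | h0 <;> nlinarith
  · rcases le_or_gt 0 m with h0 | h0 <;> nlinarith
  · rcases le_or_gt 0 m with h0 | h0 <;> nlinarith

lemma mem_sol {N : ℕ} {p : ℤ × ℤ} : p ∈ sol N ↔ 2 * p.1 ^ 2 + p.1 + p.2 ^ 2 = N := by
  simp only [sol, mem_filter, mem_product, mem_Icc, and_iff_right_iff_imp]
  intro h
  have := bound_sol h
  tauto

def cf (p : ℤ × ℤ) : ℤ := (4 * p.1 + 1) * sg p.2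

noncomputable def cN (N : ℕ) : ℤ := ∑ p ∈ sol N, cf p

lemma sg_odd {a b : ℤ} (h : (a + b) % 2 = 1) : sg a = - sg b := by unfold sg; grind
lemma sg_even {a b : ℤ} (h : (a + b) % 2 = 0) : sg a = sg b := by unfold sg; grind

lemma cN_nine (n : ℕ) : ∃ w, cN (9 * n + 1) = 3 * cN n + 8 * w := by
  set A := (sol (9 * n + 1)).filter (fun p => (p.1 + 1 - p.2) % 3 = 0) with hA
  set B := (sol (9 * n + 1)).filter (fun p => (p.1 + 1 + p.2) % 3 = 0) with hB
  have hU : A ∪ B = sol (9 * n + 1) := by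
    rw [hA, hB, ← filter_or, filter_true_of_mem]
    rintro ⟨j, m⟩ hp
    rw [mem_sol] at hp
    simp only at hp ⊢
    push_cast at hp
    have h9 : (j + 1 - m) * (j + 1 + m) = 3 * (j ^ 2 + j - 3 * n) := by linarith
    have hd : (3 : ℤ) ∣ (j + 1 - m) * (j + 1 + m) := ⟨_, h9⟩
    rcases Int.prime_three.dvd_or_dvd hd with h | h
    · left; omega
    · right; omega
  have hAB : ∑ p ∈ A, cf p = ∑ p ∈ B, cf p := by
    apply sum_nbij' (fun p => (p.1, -p.2)) (fun p => (p.1, -p.2))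
    · rintro ⟨j, m⟩ hp
      simp only [hA, hB, mem_filter, mem_sol] at hp ⊢
      refine ⟨by rw [neg_sq]; exact hp.1, by omega⟩
    · rintro ⟨j, m⟩ hp
      simp only [hA, hB, mem_filter, mem_sol] at hp ⊢
      refine ⟨by rw [neg_sq]; exact hp.1, by omega⟩
    · simp
    · simp
    · rintro ⟨j, m⟩ hp
      simp only [cf]
      rw [sg_even (a := -m) (b := m) (by omega)]
  have hI : ∑ p ∈ B, sg p.2 = 0 := by
    have : ∑ p ∈ B, sg p.2 = ∑ p ∈ B, - sg p.2 := by
      apply sum_nbij' (fun p => ((2 * p.2 - p.1 - 1) / 3, (4 * p.1 + 1 + p.2) / 3))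
        (fun p => ((2 * p.2 - p.1 - 1) / 3, (4 * p.1 + 1 + p.2) / 3))
      pick_goal 5
      · rintro ⟨j, m⟩ hp
        simp only [hB, mem_filter, mem_sol] at hp ⊢
        rw [sg_odd (a := (4 * j + 1 + m) / 3) (b := m) (by omega)]; ring
      iterate 2
        rintro ⟨j, m⟩ hp
        simp only [hB, mem_filter, mem_sol] at hp ⊢
        obtain ⟨h1, h2⟩ := hp
        obtain ⟨u, hu⟩ : ∃ u, 2 * m - j - 1 = 3 * u := ⟨(2 * m - j - 1) / 3, by omega⟩
        obtain ⟨v, hv⟩ : ∃ v, 4 * j + 1 + m = 3 * v := ⟨(4 * j + 1 + m) / 3, by omega⟩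
        have e1 : (2 * m - j - 1) / 3 = u := by omega
        have e2 : (4 * j + 1 + m) / 3 = v := by omega
        rw [e1, e2]
        refine ⟨?_, by omega⟩
        obtain rfl : m = v - 4 * j - 1 + 2 * v := by linarith
        obtain rfl : u = 2 * v - 3 * j - 1 := by linarith
        linarith
      iterate 2
        rintro ⟨j, m⟩ hp
        simp only [hB, mem_filter, mem_sol] at hp ⊢
        ext <;> simp only <;> omega
    rw [sum_neg_distrib] at this
    omega
  have hB4 : ∑ p ∈ B, cf p = 4 * ∑ p ∈ B, p.1 * sg p.2 := by
    have : ∑ p ∈ B, cf p = 4 * ∑ p ∈ B, p.1 * sg p.2 + ∑ p ∈ B, sg p.2 := by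
      rw [mul_sum, ← sum_add_distrib]
      apply sum_congr rfl
      intro p _
      simp only [cf]; ring
    rw [this, hI, add_zero]
  have hD : ∑ p ∈ A ∩ B, cf p = -3 * cN n := by
    rw [cN, mul_sum]
    symm
    apply sum_nbij' (fun p => (-3 * p.1 - 1, 3 * p.2)) (fun p => (-((p.1 + 1) / 3), p.2 / 3))
    · rintro ⟨j, m⟩ hp
      simp only [hA, hB, mem_inter, mem_filter, mem_sol] at hp ⊢
      have : 2 * (-3 * j - 1) ^ 2 + (-3 * j - 1) + (3 * m) ^ 2 = ((9 * n + 1 : ℕ) : ℤ) := by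
        push_cast; linarith
      exact ⟨⟨this, by omega⟩, ⟨this, by omega⟩⟩
    · rintro ⟨j, m⟩ hp
      simp only [hA, hB, mem_inter, mem_filter, mem_sol] at hp ⊢
      obtain ⟨⟨h, h1⟩, ⟨_, h2⟩⟩ := hp
      obtain ⟨u, hu⟩ : ∃ u, j = -3 * u - 1 := ⟨-((j + 1) / 3), by omega⟩
      obtain ⟨v, hv⟩ : ∃ v, m = 3 * v := ⟨m / 3, by omega⟩
      have e1 : -((j + 1) / 3) = u := by omega
      have e2 : m / 3 = v := by omega
      rw [e1, e2]
      subst hu hv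
      push_cast at h
      linarith
    · rintro ⟨j, m⟩ hp
      ext <;> simp only <;> omega
    · rintro ⟨j, m⟩ hp
      simp only [hA, hB, mem_inter, mem_filter, mem_sol] at hp
      ext <;> simp only <;> omega
    · rintro ⟨j, m⟩ hp
      simp only [cf]
      rw [sg_even (a := 3 * m) (b := m) (by omega)]; ring
  have hs := sum_union_inter (s₁ := A) (s₂ := B) (f := cf)
  rw [hU, hD, hAB, hB4] at hs
  exact ⟨∑ p ∈ B, p.1 * sg p.2, by rw [cN]; linarith⟩

end Arith
section Final
open PowerSeries

noncomputable def Os : ℤ⟦X⟧ := PowerSeries.mk fun n => (#(Nat.Partition.countRestricted n 2) : ℤ)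

def tripleEquiv (n : ℕ) : {f : Fin 3 → Σ m : ℕ, Nat.Partition m //
    (∑ i, (f i).1) = n ∧ ∀ i, ∀ p ∈ (f i).2.parts, ¬ 2 ∣ p} ≃
    Σ l : {l : Fin 3 → ℕ // l ∈ finAntidiagonal 3 n},
      ∀ i, {p : Nat.Partition (l.1 i) // p ∈ Nat.Partition.restricted (l.1 i) (¬ 2 ∣ ·)} where
  toFun f := ⟨⟨fun i => (f.1 i).1, by simpa using f.2.1⟩,
    fun i => ⟨(f.1 i).2, by simpa [Nat.Partition.restricted] using f.2.2 i⟩⟩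
  invFun g := ⟨fun i => ⟨g.1.1 i, (g.2 i).1⟩, mem_finAntidiagonal.1 g.1.2,
    fun i => by simpa [Nat.Partition.restricted] using (g.2 i).2⟩
  left_inv f := rfl
  right_inv g := rfl

lemma Tcount_coeff (n : ℕ) : (Tcount 2 3 n : ℤ) = coeff n (Os ^ 3) := by
  have h3 : Os ^ 3 = ∏ _i : Fin 3, Os := by simp
  rw [h3, coeff_prod, Tcount, Nat.card_congr (tripleEquiv n), Nat.card_sigma]
  simp only [Nat.card_pi]
  rw [Finset.sum_coe_sort (finAntidiagonal 3 n) (fun l => ∏ i, Nat.card {p : Nat.Partition (l i) // p ∈ Nat.Partition.restricted (l i) (¬ 2 ∣ ·)})]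
  push_cast
  symm
  apply sum_nbij' (fun (l : Fin 3 →₀ ℕ) => (⇑l : Fin 3 → ℕ)) (fun l => Finsupp.equivFunOnFinite.symm l)
  · intro l hl; simpa using hl
  · intro l hl; simpa using hl
  · intro l hl; ext; simp
  · intro l hl; ext; simp
  · intro l hl
    apply prod_congr rfl
    intro i _
    simp only [Os, coeff_mk]
    rw [← Nat.Partition.card_restricted_eq_card_countRestricted _ (by norm_num : 0 < 2)]
    simp

lemma Tcount_three (n : ℕ) : (3 : ℤ) ∣ Tcount 2 3 (3 * n + 1) := by
  rw [Tcount_coeff]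
  have : Fact (Nat.Prime 3) := ⟨Nat.prime_three⟩
  refine (ZMod.intCast_zmod_eq_zero_iff_dvd _ 3).1 ?_
  have h1 : ((coeff (3 * n + 1) (Os ^ 3) : ℤ) : ZMod 3)
      = coeff (3 * n + 1) ((PowerSeries.map (Int.castRingHom (ZMod 3)) Os) ^ 3) := by
    rw [← map_pow, coeff_map]; rfl
  rw [h1]
  set g := PowerSeries.map (Int.castRingHom (ZMod 3)) Os
  have h2 : g ^ 3 = PowerSeries.map (frobenius (ZMod 3) 3) (PowerSeries.expand 3 (by norm_num) g) :=
    (MvPowerSeries.map_frobenius_expand 3 (by norm_num)).symm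
  rw [h2, coeff_map, coeff_expand_of_not_dvd _ _ _ (by omega), map_zero]

open scoped PowerSeries.WithPiTopology in
lemma Os_prod (N : ℕ) : ∃ L0, ∀ L ≥ L0,
    (X : ℤ⟦X⟧) ^ (N + 1) ∣ Os - ∏ i ∈ range L, (1 + X ^ (i + 1)) := by
  have h := Nat.Partition.hasProd_powerSeriesMk_card_countRestricted ℤ (m := 2) (by norm_num)
  have h' : HasProd (fun i : ℕ => ∑ j ∈ range 2, (X : ℤ⟦X⟧) ^ ((i + 1) * j)) Os := h
  have ht := h'.tendsto_prod_nat
  rw [WithPiTopology.tendsto_iff_coeff_tendsto] at ht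
  have h2 : ∀ d, ∀ᶠ L in Filter.atTop,
      coeff d (∏ i ∈ range L, ∑ j ∈ range 2, (X : ℤ⟦X⟧) ^ ((i + 1) * j)) = coeff d Os := by
    intro d
    have := ht d
    rw [nhds_discrete, Filter.tendsto_pure] at this
    exact this
  have h3 : ∀ᶠ L in Filter.atTop, ∀ d ∈ range (N + 1),
      coeff d (∏ i ∈ range L, ∑ j ∈ range 2, (X : ℤ⟦X⟧) ^ ((i + 1) * j)) = coeff d Os := by
    rw [Filter.eventually_all_finset]
    intro d _; exact h2 d
  obtain ⟨L0, hL⟩ := Filter.eventually_atTop.1 h3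
  refine ⟨L0, fun L hl => ?_⟩
  rw [X_pow_dvd_iff]
  intro d hd
  rw [map_sub, ← hL L hl d (by simpa using hd)]
  simp [sum_range_succ]

lemma coeff_JT (N n : ℕ) (hn : N ≤ n) :
    coeff N (jac (X : ℤ⟦X⟧) n * theta (X : ℤ⟦X⟧) n) = cN N := by
  have hc : ∀ (z : ℤ) (k : ℕ), coeff N ((z : ℤ⟦X⟧) * X ^ k) = if k = N then z else 0 := by
    intro z k
    rw [← map_intCast (PowerSeries.C (R := ℤ)), coeff_C_mul, coeff_X_pow]
    simp [eq_comm]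
  rw [jac, theta, sum_mul_sum, ← sum_product', map_sum, cN]
  have : ∀ p : ℤ × ℤ, coeff N (((4 * p.1 + 1 : ℤ) : ℤ⟦X⟧) * X ^ (2 * p.1 ^ 2 + p.1).toNat *
      ((sg p.2 : ℤ⟦X⟧) * X ^ (p.2.natAbs ^ 2))) = if 2 * p.1 ^ 2 + p.1 + p.2 ^ 2 = (N : ℤ) then cf p else 0 := by
    rintro ⟨j, m⟩
    have h0 : 0 ≤ 2 * j ^ 2 + j := by
      rcases le_or_gt 0 j with h0 | h0 <;> nlinarith
    have e : ((4 * j + 1 : ℤ) : ℤ⟦X⟧) * X ^ (2 * j ^ 2 + j).toNat * ((sg m : ℤ⟦X⟧) * X ^ (m.natAbs ^ 2))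
        = ((cf (j, m) : ℤ) : ℤ⟦X⟧) * X ^ ((2 * j ^ 2 + j).toNat + m.natAbs ^ 2) := by
      simp only [cf]; push_cast; ring
    simp only
    rw [e, hc]
    congr 1
    apply propext
    zify
    rw [Int.toNat_of_nonneg h0, sq_abs]
  rw [sum_congr rfl (fun p _ => this p), ← sum_filter]
  symm
  apply sum_subset_zero_on_sdiff
  · rintro p hp
    rw [mem_sol] at hp
    have := bound_sol hp
    simp only [mem_filter, mem_product, mem_Icc]
    refine ⟨by omega, hp⟩
  · rintro p hp
    simp only [mem_sdiff, mem_filter, mem_sol] at hp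
    tauto
  · intros; rfl

lemma hom_jac {S S' : Type*} [CommRing S] [CommRing S'] (f : S →+* S') (x : S) (n : ℕ) :
    f (jac x n) = jac (f x) n := by
  simp only [jac, map_sum, map_mul, map_pow, map_intCast]

lemma hom_theta {S S' : Type*} [CommRing S] [CommRing S'] (f : S →+* S') (x : S) (n : ℕ) :
    f (theta x n) = theta (f x) n := by simp [theta]

lemma prod_one_add {S : Type*} [CommRing S] (x : S) (L : ℕ) :
    (∏ i ∈ range L, (1 + x ^ (i + 1))) * qP x L = qP (x ^ 2) L := by
  rw [qP, qP, ← prod_mul_distrib]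
  apply prod_congr rfl; intro i _; ring

lemma Tcount_mod8 (N : ℕ) : ∃ w, (Tcount 2 3 N : ℤ) = cN N + 8 * w := by
  obtain ⟨L0, hL0⟩ := Os_prod N
  set L := max L0 (N + 1)
  set n := 2 * (N + 1) + 1
  have hdiv := hL0 L (le_max_left _ _)
  set I : Ideal ℤ⟦X⟧ := Ideal.span {X ^ (N + 1)} with hI
  set f := Ideal.Quotient.mk I with hf
  set x := f X with hxd
  have hx : x ^ (N + 1) = 0 := by
    rw [hxd, ← map_pow, Ideal.Quotient.eq_zero_iff_mem]
    exact Ideal.mem_span_singleton_self _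
  have hx2 : (x ^ 2) ^ (N + 1) = 0 := by rw [← pow_mul, mul_comm, pow_mul, hx]; ring
  have hO : f Os = ∏ i ∈ range L, (1 + x ^ (i + 1)) := by
    have : f Os = f (∏ i ∈ range L, (1 + X ^ (i + 1))) := by
      rw [Ideal.Quotient.eq]
      exact Ideal.mem_span_singleton.2 hdiv
    rw [this]; simp [hxd]
  have h1 := prod_one_add x L
  rw [← hO, qP_stable hx (le_max_right _ _), qP_stable hx2 (le_max_right _ _)] at h1
  have h2 := gauss hx (n := n) le_rfl
  have h3 := jacobi hx (M := n) (by omega)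
  have hu1 := qP_unit hx (N + 1)
  have hu2 := qP_unit hx2 (N + 1)
  have key : f Os ^ 3 * theta x n ^ 4 = jac x n * theta x n := by
    rw [← h3]
    apply (hu1.pow 3).mul_right_cancel
    apply hu2.mul_right_cancel
    calc _ = (f Os * qP x (N + 1)) ^ 3 * theta x n ^ 4 * qP (x ^ 2) (N + 1) := by ring
      _ = (theta x n * qP (x ^ 2) (N + 1)) ^ 4 := by rw [h1]; ring
      _ = qP x (N + 1) ^ 6 * (theta x n * qP (x ^ 2) (N + 1)) := by rw [h2]; ring
      _ = _ := by ring
  obtain ⟨w, hw⟩ := theta_form (X : ℤ⟦X⟧) n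
  have h4 : theta x n = f (theta X n) := by rw [hom_theta]
  have h5 : jac x n = f (jac X n) := by rw [hom_jac]
  rw [h4, h5, ← map_pow, ← map_pow, ← map_mul, ← map_mul, Ideal.Quotient.eq,
    Ideal.mem_span_singleton, X_pow_dvd_iff] at key
  have h6 := key N (by omega)
  rw [map_sub, coeff_JT N n (by omega)] at h6
  have h7 : theta (X : ℤ⟦X⟧) n ^ 4 = 1 + ((8 : ℤ) : ℤ⟦X⟧) * (w + 3 * w ^ 2 + 4 * w ^ 3 + 2 * w ^ 4) := by
    rw [hw]; push_cast; ring
  rw [h7, mul_add, mul_one, map_add, ← Tcount_coeff, mul_left_comm,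
    ← map_intCast (PowerSeries.C (R := ℤ)), coeff_C_mul] at h6
  refine ⟨-coeff N (Os ^ 3 * (w + 3 * w ^ 2 + 4 * w ^ 3 + 2 * w ^ 4)), ?_⟩
  simp only [Int.cast_id] at h6
  linarith

lemma Tcount_nine (n : ℕ) : ∃ w : ℤ, (Tcount 2 3 (9 * n + 1) : ℤ) = 3 * Tcount 2 3 n + 8 * w := by
  obtain ⟨u, hu⟩ := Tcount_mod8 n
  obtain ⟨v, hv⟩ := Tcount_mod8 (9 * n + 1)
  obtain ⟨w, hw⟩ := cN_nine n
  exact ⟨w + v - 3 * u, by rw [hv, hu, hw]; ring⟩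

end Final

theorem stmt8 (n : ℕ) :
    Tcount 2 3 (3 * n + 1) ≡ Tcount 2 3 (243 * n + 91) [MOD 24] ∧
    3 * Tcount 2 3 (3 * n + 1) ≡ Tcount 2 3 (27 * n + 10) [MOD 24] := by
  obtain ⟨u, hu⟩ := Tcount_nine (3 * n + 1)
  obtain ⟨v, hv⟩ := Tcount_nine (27 * n + 10)
  have h0 := Tcount_three n
  have h1 := Tcount_three (9 * n + 3)
  have h2 := Tcount_three (81 * n + 30)
  rw [show 9 * (3 * n + 1) + 1 = 27 * n + 10 by ring] at hu
  rw [show 9 * (27 * n + 10) + 1 = 243 * n + 91 by ring] at hv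
  rw [show 3 * (9 * n + 3) + 1 = 27 * n + 10 by ring] at h1
  rw [show 3 * (81 * n + 30) + 1 = 243 * n + 91 by ring] at h2
  simp only [Nat.ModEq]
  omega
end
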